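/- arXiv:1708.05343 — 2 statements merged into one kernel-verified Lean document; each statement's English description precedes it below -/
import Mathlib

section
/- If the function V₁(m) belongs to the class 𝒱∞ and c ≥ 1 is a real number, then the function m ↦ c·V₁(m) − c + 1 also belongs to 𝒱∞. -/
/-! By expanding the Cauchy–Stieltjes kernel of `V` in powers of `m`, one obtains a basis of the
polynomials in `x` whose Gram matrix, for a functional with `∫ f(x, m) = 1`, is the coefficient
matrix of `1 / (1 - s t P(s, t))` with `P(s, t) = (s - t) / (s V(t) - t V(s))`. By the solution of
the moment problem on an interval, `V ∈ 𝒱` if and only if `V(0) = 1` and this matrix is positive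
semidefinite.

Replacing `V` by `V(c ·)` for all `c` puts an arbitrary `ε ≥ 0` in front of `s t P`. Since Schur
products preserve positivity, and `s t P` is the first-order term in `ε`, `V ∈ 𝒱∞` if and only if
`V(0) = 1` and `P` itself is positive semidefinite.

Finally, `P = 1 / (1 - Z)`, where `V ↦ c V - c + 1` turns `Z` into `c Z`, and
`1 / (1 - c Z) = P / (1 - (c - 1) (P - 1))`. The right-hand side is a power series in the positive
semidefinite kernels `P` and `P - 1` with nonnegative coefficients as soon as `c ≥ 1`. -/

open MeasureTheory Filter

noncomputable section

/-- The Cauchy–Stieltjes kernel density `f(x,m) = V(m)/(V(m)+m(m-x))`. -/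
def cskKernel (V : ℝ → ℝ) (m x : ℝ) : ℝ := V m / (V m + m * (m - x))

/-- `ν` is a non-degenerate, compactly supported probability measure on `ℝ` with mean `0`. -/
def IsCSKGenerator (ν : Measure ℝ) : Prop :=
  IsProbabilityMeasure ν ∧
  (∃ R : ℝ, ν (Set.Icc (-R) R)ᶜ = 0) ∧
  (∀ a : ℝ, ν ≠ Measure.dirac a) ∧
  (∫ x, x ∂ν) = 0

/-- `V` is the variance function of the CSK family generated by `ν`:
`V` is real-analytic near `0`, `V 0 > 0`, and for all `m` near `0` the kernel
`f(x,m)` is a.e. nonnegative, integrates to `1`, and has mean `m`. -/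
def IsCSKVarianceFun (ν : Measure ℝ) (V : ℝ → ℝ) : Prop :=
  AnalyticAt ℝ V 0 ∧ 0 < V 0 ∧
  ∃ ε > 0, ∀ m : ℝ, |m| < ε →
    (∀ᵐ x ∂ν, 0 ≤ cskKernel V m x) ∧
    (∫ x, cskKernel V m x ∂ν) = 1 ∧
    (∫ x, x * cskKernel V m x ∂ν) = m

/-- The class `𝒱` of variance functions of CSK families generated by
non-degenerate compactly supported probability measures with mean `0` and variance `1`. -/
def memV (V : ℝ → ℝ) : Prop :=
  ∃ ν : Measure ℝ, IsCSKGenerator ν ∧ (∫ x, x ^ 2 ∂ν) = 1 ∧ IsCSKVarianceFun ν V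

/-- The class `𝒱∞`: those `V` such that `m ↦ V (c * m)` is in `𝒱` for every real `c`. -/
def memVinf (V : ℝ → ℝ) : Prop := ∀ c : ℝ, memV (fun m => V (c * m))

open scoped Topology

/-! ### The moment problem on a compact set -/

section MomentProblem

open Polynomial

lemma exists_eq_C_add_sq_mul {p : ℝ[X]} (hdeg : 0 < p.natDegree) (hp : ∀ x, 0 ≤ p.eval x) :
    ∃ (a : ℝ) (r : ℝ[X]), p = C (p.eval a) + (X - C a) ^ 2 * r ∧
      r.natDegree < p.natDegree ∧ ∀ x, 0 ≤ r.eval x := by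
  have htop : Tendsto (fun x => p.eval x) (cocompact ℝ) atTop :=
    (p.tendsto_norm_atTop (natDegree_pos_iff_degree_pos.1 hdeg)
      (tendsto_norm_cocompact_atTop (E := ℝ))).congr fun x => Real.norm_of_nonneg (hp x)
  obtain ⟨a, ha⟩ := p.continuous.exists_forall_le htop
  obtain ⟨q, hq⟩ := dvd_iff_isRoot.2 (show IsRoot (p - C (p.eval a)) a by simp)
  have hderiv : (derivative p).eval a = 0 :=
    (show IsLocalMin (fun x => p.eval x) a from .of_forall ha).hasDerivAt_eq_zero (p.hasDerivAt a)
  have hqa : IsRoot q a := by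
    have h := congrArg (fun f => (derivative f).eval a) hq
    simpa [derivative_mul, hderiv] using h.symm
  obtain ⟨r, rfl⟩ := dvd_iff_isRoot.2 hqa
  have hpr : p = C (p.eval a) + (X - C a) ^ 2 * r := by rw [sq, mul_assoc, ← hq]; ring
  have hr0 : r ≠ 0 := by
    rintro rfl
    rw [hpr, mul_zero, add_zero, natDegree_C] at hdeg
    exact hdeg.false
  refine ⟨a, r, hpr, ?_, fun x => ?_⟩
  · conv_rhs => rw [hpr, natDegree_C_add, natDegree_mul (pow_ne_zero 2 (X_sub_C_ne_zero a)) hr0,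
      natDegree_pow, natDegree_X_sub_C]
    lia
  · have hoff : ∀ y ∈ ({a}ᶜ : Set ℝ), 0 ≤ r.eval y := fun y hy => by
      have h : p.eval y = p.eval a + (y - a) ^ 2 * r.eval y := by
        conv_lhs => rw [hpr]
        simp
      exact (mul_nonneg_iff_of_pos_left (sq_pos_of_ne_zero (sub_ne_zero.2 hy))).1
        (by linarith [ha y])
    exact (isClosed_le continuous_const r.continuous).closure_subset_iff.2 hoff
      (dense_compl_singleton a x)

lemma isSumSq_of_eval_nonneg {p : ℝ[X]} (hp : ∀ x, 0 ≤ p.eval x) : IsSumSq p := by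
  induction hn : p.natDegree using Nat.strong_induction_on generalizing p with
  | _ n ih =>
  have isSumSq_C {a : ℝ} (ha : 0 ≤ a) : IsSumSq (C a) := by
    rw [← Real.mul_self_sqrt ha, C_mul]
    exact .mul_self _
  rcases Nat.eq_zero_or_pos p.natDegree with h0 | hpos
  · obtain ⟨a, rfl⟩ := natDegree_eq_zero.1 h0
    exact isSumSq_C (by simpa using hp 0)
  · obtain ⟨a, r, hpr, hdeg, hr⟩ := exists_eq_C_add_sq_mul hpos hp
    rw [hpr]
    exact (isSumSq_C (hp a)).add (((IsSquare.sq _).isSumSq).mul (ih _ (hn ▸ hdeg) hr rfl))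

lemma map_nonneg_of_isSumSq {A : Type*} [Semiring A] [Module ℝ A] {Λ : A →ₗ[ℝ] ℝ}
    (hΛ : ∀ q, 0 ≤ Λ (q * q)) {p : A} (hp : IsSumSq p) : 0 ≤ Λ p := by
  induction hp with
  | zero => simp
  | sq_add q _ ih => simpa using add_nonneg (hΛ q) ih

lemma abs_eval_le_mul_pow (p : ℝ[X]) {x r : ℝ} {N : ℕ} (hr : 0 < r) (hx : r ≤ |x|)
    (hN : p.natDegree ≤ N) :
    |p.eval x| ≤ (∑ k ∈ Finset.range (p.natDegree + 1), |p.coeff k| * r ^ k) * (|x| / r) ^ N := by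
  rw [eval_eq_sum_range, Finset.sum_mul]
  refine (Finset.abs_sum_le_sum_abs _ _).trans (Finset.sum_le_sum fun k hk => ?_)
  have hkN : k ≤ N := (Finset.mem_range_succ_iff.1 hk).trans hN
  calc |p.coeff k * x ^ k| = |p.coeff k| * r ^ k * (|x| / r) ^ k := by
        rw [abs_mul, abs_pow, div_pow]; field_simp
    _ ≤ |p.coeff k| * r ^ k * (|x| / r) ^ N := by
        gcongr
        exact (one_le_div hr).2 hx

-- Adding `K (x / r) ^ (2 * N)` makes `p` nonnegative on the whole line, and `Λ` of that correction
-- tends to `0`.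
lemma map_nonneg_of_eval_nonneg_of_abs_le {Λ : ℝ[X] →ₗ[ℝ] ℝ} (hΛ : ∀ q, 0 ≤ Λ (q * q))
    {B R r : ℝ} (hR : 0 ≤ R) (hRr : R < r) (hB : ∀ n, |Λ (X ^ n)| ≤ B * R ^ n) {p : ℝ[X]}
    (hp : ∀ x, |x| ≤ r → 0 ≤ p.eval x) : 0 ≤ Λ p := by
  have hr : 0 < r := hR.trans_lt hRr
  set K := ∑ k ∈ Finset.range (p.natDegree + 1), |p.coeff k| * r ^ k
  have : 0 ≤ K := by positivity
  have hbound : ∀ N ≥ p.natDegree, 0 ≤ Λ p + K * B * ((R / r) ^ 2) ^ N := fun N hN => by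
    have hnonneg : ∀ x, 0 ≤ (p + C (K / r ^ (2 * N)) * X ^ (2 * N)).eval x := fun x => by
      have hcorr : K / r ^ (2 * N) * x ^ (2 * N) = K * (|x| / r) ^ (2 * N) := by
        rw [div_pow, Even.pow_abs (even_two_mul N)]; ring
      simp only [eval_add, eval_mul, eval_C, eval_pow, eval_X, hcorr]
      rcases le_total |x| r with hx | hx
      · have := hp x hx
        positivity
      · linarith [neg_abs_le (p.eval x),
          abs_eval_le_mul_pow p hr hx (show p.natDegree ≤ 2 * N by lia)]
    have h := map_nonneg_of_isSumSq hΛ (isSumSq_of_eval_nonneg hnonneg)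
    rw [map_add, ← smul_eq_C_mul, map_smul, smul_eq_mul] at h
    have hle : K / r ^ (2 * N) * Λ (X ^ (2 * N)) ≤ K * B * ((R / r) ^ 2) ^ N :=
      calc _ ≤ K / r ^ (2 * N) * (B * R ^ (2 * N)) := by
            gcongr
            exact (le_abs_self _).trans (hB _)
        _ = _ := by rw [← pow_mul, div_pow]; ring
    linarith
  have hlim : Tendsto (fun N : ℕ => Λ p + K * B * ((R / r) ^ 2) ^ N) atTop
      (𝓝 (Λ p + K * B * 0)) := by
    refine ((tendsto_pow_atTop_nhds_zero_of_lt_one (by positivity) ?_).const_mul _).const_add _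
    exact pow_lt_one₀ (by positivity) ((div_lt_one hr).2 hRr) two_ne_zero
  simpa using ge_of_tendsto hlim (eventually_atTop.2 ⟨_, hbound⟩)

instance {K : Type*} [TopologicalSpace K] :
    PosSMulMono ℝ (CompactlySupportedContinuousMap K ℝ) :=
  ⟨fun _ ha _ _ hf x => mul_le_mul_of_nonneg_left (hf x) ha⟩

lemma exists_positiveLinearMap_extension {K E : Type*} [TopologicalSpace K] [CompactSpace K]
    [AddCommGroup E] [Module ℝ E] (T : E →ₗ[ℝ] CompactlySupportedContinuousMap K ℝ)
    (hT : ∃ e, ∀ x, T e x = 1) (Λ : E →ₗ[ℝ] ℝ) (hΛ : ∀ p, 0 ≤ T p → 0 ≤ Λ p) :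
    ∃ Λ' : CompactlySupportedContinuousMap K ℝ →ₚ[ℝ] ℝ, ∀ p, Λ' (T p) = Λ p := by
  have hker : LinearMap.ker T ≤ LinearMap.ker Λ := fun p (hp : T p = 0) =>
    le_antisymm (by simpa using hΛ (-p) (by rw [map_neg, hp, neg_zero])) (hΛ p hp.ge)
  let φ : LinearMap.range T →ₗ[ℝ] ℝ :=
    ((LinearMap.ker T).liftQ Λ hker).comp T.quotKerEquivRange.symm.toLinearMap
  have hφ : ∀ p, φ ⟨T p, LinearMap.mem_range_self T p⟩ = Λ p := fun p => by
    have : T.quotKerEquivRange.symm ⟨T p, LinearMap.mem_range_self T p⟩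
        = (LinearMap.ker T).mkQ p := (LinearEquiv.symm_apply_eq _).2 rfl
    simp only [φ, LinearMap.comp_apply, LinearEquiv.coe_coe, this, Submodule.mkQ_apply,
      Submodule.liftQ_apply]
  obtain ⟨g, hgT, hg⟩ := riesz_extension
    (PointedCone.positive ℝ (CompactlySupportedContinuousMap K ℝ)) ⟨LinearMap.range T, φ⟩
    (by
      rintro ⟨_, p, rfl⟩ hp
      exact (hΛ p hp).trans_eq (hφ p).symm)
    (fun y => by
      obtain ⟨M, hM⟩ := (isCompact_range y.continuous).bddBelow
      obtain ⟨e, he⟩ := hT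
      refine ⟨⟨T (-M • e), LinearMap.mem_range_self T _⟩, fun x => ?_⟩
      simpa [he] using hM (Set.mem_range_self x))
  exact ⟨PositiveLinearMap.mk₀ g hg, fun p => (hgT ⟨T p, _⟩).trans (hφ p)⟩

theorem exists_measure_integral_eval_eq {K : Set ℝ} (hK : IsCompact K) {Λ : ℝ[X] →ₗ[ℝ] ℝ}
    (hΛ : ∀ p : ℝ[X], (∀ x ∈ K, 0 ≤ p.eval x) → 0 ≤ Λ p) :
    ∃ ν : Measure ℝ, IsFiniteMeasure ν ∧ ν Kᶜ = 0 ∧ ∀ p : ℝ[X], ∫ x, p.eval x ∂ν = Λ p := by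
  have : CompactSpace K := isCompact_iff_compactSpace.1 hK
  let T : ℝ[X] →ₗ[ℝ] CompactlySupportedContinuousMap K ℝ :=
    { toFun p := CompactlySupportedContinuousMap.continuousMapEquiv
        ⟨fun x : K => p.eval (x : ℝ), p.continuous.comp continuous_subtype_val⟩
      map_add' p q := by ext; simp
      map_smul' a p := by ext; simp }
  obtain ⟨Λ', hΛ'⟩ := exists_positiveLinearMap_extension T ⟨1, fun x => eval_one⟩ Λ
    fun p hp => hΛ p fun x hx => hp ⟨x, hx⟩
  refine ⟨(RealRMK.rieszMeasure Λ').map Subtype.val, inferInstance, ?_, fun p => ?_⟩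
  · rw [Measure.map_apply measurable_subtype_coe hK.measurableSet.compl, Set.preimage_compl,
      Subtype.coe_preimage_self, Set.compl_univ, measure_empty]
  · rw [integral_map measurable_subtype_coe.aemeasurable
      p.continuous.aestronglyMeasurable, ← hΛ' p, ← RealRMK.integral_rieszMeasure Λ' (T p)]
    rfl

theorem exists_measure_of_hankel_nonneg {Λ : ℝ[X] →ₗ[ℝ] ℝ} (hΛ : ∀ q, 0 ≤ Λ (q * q))
    {B R : ℝ} (hR : 0 ≤ R) (hB : ∀ n, |Λ (X ^ n)| ≤ B * R ^ n) :
    ∃ (ν : Measure ℝ) (ρ : ℝ), IsFiniteMeasure ν ∧ ν (Set.Icc (-ρ) ρ)ᶜ = 0 ∧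
      ∀ p : ℝ[X], ∫ x, p.eval x ∂ν = Λ p := by
  obtain ⟨ν, h⟩ := exists_measure_integral_eval_eq (isCompact_Icc (a := -(R + 1)) (b := R + 1))
    fun p hp => map_nonneg_of_eval_nonneg_of_abs_le hΛ hR (lt_add_one R) hB
      fun x hx => hp x (abs_le.1 hx)
  exact ⟨ν, R + 1, h⟩

end MomentProblem

/-! ### Bivariate power series -/

section FormalKernels

open PowerSeries

variable {R : Type*} [CommRing R]

/-- The geometric series `∑ Kⁿ = (1 - K)⁻¹`; meaningful when `K` has no constant term. -/
def geomSeries (K : R⟦X⟧) : R⟦X⟧ := invOfUnit (1 - K) 1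

lemma geomSeries_mul_one_sub {K : R⟦X⟧} (hK : constantCoeff K = 0) :
    geomSeries K * (1 - K) = 1 :=
  invOfUnit_mul _ _ (by simp [hK])

lemma eq_geomSeries {K L : R⟦X⟧} (hK : constantCoeff K = 0) (hL : L * (1 - K) = 1) :
    L = geomSeries K :=
  left_inv_eq_right_inv hL (by rw [mul_comm, geomSeries_mul_one_sub hK])

lemma constantCoeff_geomSeries (K : R⟦X⟧) : constantCoeff (geomSeries K) = 1 := by
  simp [geomSeries]

lemma coeff_geomSeries {K : R⟦X⟧} (hK : constantCoeff K = 0) {j N : ℕ} (hN : j < N) :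
    coeff j (geomSeries K) = ∑ n ∈ Finset.range N, coeff j (K ^ n) := by
  have htail : ∑ n ∈ Finset.range N, K ^ n = geomSeries K - geomSeries K * K ^ N := by
    linear_combination (geomSeries K) * geom_sum_mul_neg K N -
      (∑ n ∈ Finset.range N, K ^ n) * geomSeries_mul_one_sub hK
  have hdvd : X ^ N ∣ geomSeries K * K ^ N :=
    (pow_dvd_pow_of_dvd (X_dvd_iff.2 hK) N).mul_left _
  rw [← map_sum, htail, map_sub, X_pow_dvd_iff.1 hdvd j hN, sub_zero]

lemma map_geomSeries {S : Type*} [CommRing S] (ψ : R⟦X⟧ →+* S⟦X⟧) {K : R⟦X⟧}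
    (hK : constantCoeff K = 0) (hψ : constantCoeff (ψ K) = 0) :
    ψ (geomSeries K) = geomSeries (ψ K) :=
  eq_geomSeries hψ (by rw [← map_one ψ, ← map_sub, ← map_mul, geomSeries_mul_one_sub hK])

lemma geomSeries_C_mul {K : R⟦X⟧} (hK : constantCoeff K = 0) (c : R) :
    geomSeries (C c * K) = geomSeries K * geomSeries (C (c - 1) * (geomSeries K - 1)) := by
  have hK' : constantCoeff (C (c - 1) * (geomSeries K - 1)) = 0 := by
    simp [constantCoeff_geomSeries]
  refine (eq_geomSeries (by simp [hK]) ?_).symm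
  have hfactor : geomSeries K * (1 - C c * K) = 1 - C (c - 1) * (geomSeries K - 1) := by
    rw [map_sub, map_one]
    linear_combination C c * geomSeries_mul_one_sub hK
  rw [mul_right_comm, hfactor, mul_comm, geomSeries_mul_one_sub hK']

lemma constantCoeff_C_X_mul_X_mul (K : R⟦X⟧⟦X⟧) : constantCoeff (C X * X * K) = 0 := by simp

lemma coeff_succ_coeff_succ_C_X_mul_X_mul (K : R⟦X⟧⟦X⟧) (i j : ℕ) :
    coeff (i + 1) (coeff (j + 1) (C X * X * K)) = coeff i (coeff j K) := by
  rw [mul_assoc, coeff_C_mul, coeff_succ_X_mul, coeff_succ_X_mul]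

lemma C_X_sub_X_ne_zero [Nontrivial R] : (C X - X : R⟦X⟧⟦X⟧) ≠ 0 := fun h => by
  simpa [coeff_X] using congrArg (fun K => coeff 1 (coeff 0 K)) h

/-- The bivariate series `∑ v_{i+j+2} sⁱ tʲ`. Throughout, `R⟦X⟧⟦X⟧` is the ring of series in `s`
and `t`, with `s` the inner variable `C X` and `t` the outer variable `X`; so `v(s)` is `C v` and
`v(t)` is `map C v`. -/
def hankelTail (v : R⟦X⟧) : R⟦X⟧⟦X⟧ := mk fun j => mk fun i => coeff (i + j + 2) v

@[simp]
lemma coeff_coeff_hankelTail (v : R⟦X⟧) (i j : ℕ) :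
    coeff i (coeff j (hankelTail v)) = coeff (i + j + 2) v := by
  simp [hankelTail]

lemma C_X_sub_X_mul_one_sub_hankelTail {v : R⟦X⟧} (hv : constantCoeff v = 1) :
    (C X - X) * (1 - C X * X * hankelTail v) = C X * map C v - X * C v := by
  rw [← coeff_zero_eq_constantCoeff_apply] at hv
  have hsplit : (C X - X) * (1 - C X * X * hankelTail v) =
      C X - X + X * (C X * (X * hankelTail v)) - C X * (X * (C X * hankelTail v)) := by ring
  rw [hsplit]
  ext j i
  rcases j with _ | _ | j <;> rcases i with _ | _ | i <;>
    simp [-coeff_zero_eq_constantCoeff, coeff_X, coeff_one, coeff_succ_X_mul, coeff_zero_X_mul, hv,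
      add_right_comm _ 1, ← add_assoc]

/-- The kernel `(s - t) / (s v(t) - t v(s))` of a series with `v(0) = 1`, encoded by cancelling the
common factor `s - t`. -/
def slopeKernel (v : R⟦X⟧) : R⟦X⟧⟦X⟧ := geomSeries (C X * X * hankelTail v)

lemma constantCoeff_slopeKernel (v : R⟦X⟧) : constantCoeff (slopeKernel v) = 1 :=
  constantCoeff_geomSeries _

lemma slopeKernel_mul_one_sub (v : R⟦X⟧) :
    slopeKernel v * (1 - C X * X * hankelTail v) = 1 :=
  geomSeries_mul_one_sub (constantCoeff_C_X_mul_X_mul _)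

lemma slopeKernel_affine (v : R⟦X⟧) (c : R) :
    slopeKernel (C c * v + C (1 - c)) =
      slopeKernel v * geomSeries (C (C (c - 1)) * (slopeKernel v - 1)) := by
  have hQ : hankelTail (C c * v + C (1 - c)) = C (C c) * hankelTail v := by
    ext j i
    simp
  have hZ := constantCoeff_C_X_mul_X_mul (hankelTail v)
  rw [slopeKernel, hQ, mul_left_comm, geomSeries_C_mul hZ, slopeKernel,
    map_sub (C (R := R)) c 1, map_one]

/-- The substitution `(s, t) ↦ (l s, l t)`. -/
def rescaleBoth (l : R) : R⟦X⟧⟦X⟧ →+* R⟦X⟧⟦X⟧ :=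
  (PowerSeries.map (rescale l)).comp (rescale (C l))

@[simp]
lemma coeff_coeff_rescaleBoth (l : R) (K : R⟦X⟧⟦X⟧) (i j : ℕ) :
    coeff i (coeff j (rescaleBoth l K)) = l ^ (i + j) * coeff i (coeff j K) := by
  rw [rescaleBoth, RingHom.comp_apply, coeff_map, coeff_rescale, coeff_rescale, ← map_pow,
    coeff_C_mul, pow_add, mul_assoc]

lemma rescale_C (l c : R) : rescale l (C c) = C c := by
  ext n
  rcases n with _ | n <;> simp [coeff_C]

lemma rescaleBoth_C_X_mul_X (l : R) : rescaleBoth l (C X * X) = C X * X * C (C (l ^ 2)) := by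
  simp only [rescaleBoth, RingHom.comp_apply, map_mul, rescale_X, rescale_C, PowerSeries.map_C,
    PowerSeries.map_X, map_pow]
  ring

lemma slopeKernel_rescale (l : R) (v : R⟦X⟧) :
    slopeKernel (rescale l v) = rescaleBoth l (slopeKernel v) := by
  have hQ : hankelTail (rescale l v) = C (C (l ^ 2)) * rescaleBoth l (hankelTail v) := by
    ext j i
    simp only [coeff_coeff_hankelTail, coeff_rescale, coeff_C_mul, coeff_coeff_rescaleBoth]
    ring
  have hZ : rescaleBoth l (C X * X * hankelTail v) = C X * X * hankelTail (rescale l v) := by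
    rw [hQ, map_mul, rescaleBoth_C_X_mul_X, mul_assoc]
  have hK := constantCoeff_C_X_mul_X_mul (hankelTail v)
  have hK' := constantCoeff_C_X_mul_X_mul (hankelTail (rescale l v))
  rw [slopeKernel, slopeKernel, map_geomSeries _ hK (hZ ▸ hK'), hZ]

/-- The kernel `1 / (1 - s t P(s, t))`, where `P` is the slope kernel of `v`. Its coefficients are
the Gram matrix of the coefficients of the Cauchy–Stieltjes kernel with variance function `v`, for
the functional whose value at that kernel is `1`. -/
def gramKernel (v : R⟦X⟧) : R⟦X⟧⟦X⟧ := geomSeries (C X * X * slopeKernel v)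

lemma rescaleBoth_gramKernel (l : R) (v : R⟦X⟧) : rescaleBoth l (gramKernel v) =
    geomSeries (C (C (l ^ 2)) * (C X * X * slopeKernel (rescale l v))) := by
  have hK : rescaleBoth l (C X * X * slopeKernel v) =
      C (C (l ^ 2)) * (C X * X * slopeKernel (rescale l v)) := by
    rw [map_mul, rescaleBoth_C_X_mul_X, slopeKernel_rescale]
    ring
  have h := constantCoeff_C_X_mul_X_mul (slopeKernel v)
  rw [gramKernel, map_geomSeries _ h (hK ▸ by simp), hK]

end FormalKernels

/-! ### The Gram matrix of the Cauchy–Stieltjes kernel -/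

section GramIdentity

open PowerSeries
open scoped Polynomial

variable {R : Type*} [CommRing R]

/-- Coefficientwise application of an additive map to a power series. -/
def mapCoeff {A B : Type*} [CommRing A] [CommRing B] (E : A →+ B) : A⟦X⟧ →+ B⟦X⟧ where
  toFun F := mk fun n => E (coeff n F)
  map_zero' := by ext; simp
  map_add' _ _ := by ext; simp

section mapCoeff

variable {A B : Type*} [CommRing A] [CommRing B] (E : A →+ B)

@[simp]
lemma coeff_mapCoeff (F : A⟦X⟧) (n : ℕ) : coeff n (mapCoeff E F) = E (coeff n F) := by
  simp [mapCoeff]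

lemma mapCoeff_map_mul {φ : B →+* A} (hE : ∀ b a, E (φ b * a) = b * E a) (G : B⟦X⟧) (F : A⟦X⟧) :
    mapCoeff E (PowerSeries.map φ G * F) = G * mapCoeff E F := by
  ext n
  simp [coeff_mul, hE]

lemma mapCoeff_C (a : A) : mapCoeff E (C a) = C (E a) := by
  ext n
  rcases n with _ | n <;> simp [-coeff_zero_eq_constantCoeff, coeff_C]

lemma mapCoeff_map_C (F : A⟦X⟧) :
    mapCoeff (mapCoeff E) (PowerSeries.map C F) = PowerSeries.map C (mapCoeff E F) := by
  ext n : 1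
  simp [mapCoeff_C]

end mapCoeff

/-- The denominator `v(m) + m² - x m` of the Cauchy–Stieltjes kernel, as a series in `m` over the
polynomials in `x`. -/
def cskDenom (v : R⟦X⟧) : R[X]⟦X⟧ :=
  PowerSeries.map Polynomial.C v + X ^ 2 - C Polynomial.X * X

/-- The Cauchy–Stieltjes kernel `v(m) / (v(m) + m² - x m)`, as a series in `m` over the polynomials
in `x`; the quotient is meaningful when `v(0) = 1`. -/
def cskSeries (v : R⟦X⟧) : R[X]⟦X⟧ := PowerSeries.map Polynomial.C v * invOfUnit (cskDenom v) 1

variable {v : R⟦X⟧}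

lemma constantCoeff_cskDenom (hv : constantCoeff v = 1) : constantCoeff (cskDenom v) = 1 := by
  rw [← coeff_zero_eq_constantCoeff_apply] at hv ⊢
  simp [-coeff_zero_eq_constantCoeff, cskDenom, hv, coeff_X_pow]

lemma cskSeries_mul_cskDenom (hv : constantCoeff v = 1) :
    cskSeries v * cskDenom v = PowerSeries.map Polynomial.C v := by
  rw [cskSeries, mul_assoc, invOfUnit_mul _ _ (by simpa using constantCoeff_cskDenom hv), mul_one]

lemma coeff_zero_cskSeries (hv : constantCoeff v = 1) : coeff 0 (cskSeries v) = 1 := by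
  have h := congrArg constantCoeff (cskSeries_mul_cskDenom hv)
  rw [map_mul, constantCoeff_cskDenom hv, mul_one] at h
  rw [coeff_zero_eq_constantCoeff_apply, h, ← coeff_zero_eq_constantCoeff_apply, coeff_map,
    coeff_zero_eq_constantCoeff_apply, hv, Polynomial.C_1]

lemma coeff_succ_cskSeries (hv : constantCoeff v = 1) (n : ℕ) :
    coeff (n + 1) (cskSeries v) = Polynomial.X * coeff n (cskSeries v) +
      (Polynomial.C (coeff (n + 1) v) - ∑ k ∈ Finset.range (n + 1),
        coeff k (cskSeries v) * Polynomial.C (coeff (n + 1 - k) (v + X ^ 2))) := by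
  have hF : cskSeries v * PowerSeries.map Polynomial.C (v + X ^ 2) =
      PowerSeries.map Polynomial.C v + X * (C Polynomial.X * cskSeries v) := by
    rw [← cskSeries_mul_cskDenom hv, cskDenom]
    simp only [map_add, map_pow, PowerSeries.map_X]
    ring
  have h := congrArg (coeff (n + 1)) hF
  have hv0 : coeff 0 (v + X ^ 2) = 1 := by simp [hv]
  rw [coeff_mul, Finset.Nat.sum_antidiagonal_eq_sum_range_succ
    (fun i j => coeff i (cskSeries v) * coeff j _), Finset.sum_range_succ] at h
  simp only [coeff_map, map_add (coeff (n + 1)), coeff_succ_X_mul, coeff_C_mul, Nat.sub_self, hv0,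
    Polynomial.C_1] at h
  linear_combination h

lemma isMonicOfDegree_coeff_cskSeries [Nontrivial R] (hv : constantCoeff v = 1) (n : ℕ) :
    Polynomial.IsMonicOfDegree (coeff n (cskSeries v)) n := by
  induction n using Nat.strong_induction_on with
  | _ n ih =>
  rcases n with _ | n
  · rw [coeff_zero_cskSeries hv]
    exact Polynomial.isMonicOfDegree_zero_iff.2 rfl
  · rw [coeff_succ_cskSeries hv, add_comm n 1]
    refine ((Polynomial.isMonicOfDegree_X R).mul (ih n n.lt_succ_self)).add_right
      (Nat.lt_one_add_iff.2 ?_)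
    refine (Polynomial.natDegree_sub_le_of_le (m := 0) (n := n) (by simp)
      (Polynomial.natDegree_sum_le_of_forall_le _ _ fun k hk => ?_)).trans (by simp)
    have hk' : k < n + 1 := by simpa [add_comm] using hk
    exact (Polynomial.natDegree_mul_C_le _ _).trans
      ((ih k hk').natDegree_eq.trans_le (Nat.lt_succ_iff.1 hk'))

/-- The coefficients of the Cauchy–Stieltjes kernel form a basis of the polynomials. -/
def cskBasis [IsDomain R] (hv : constantCoeff v = 1) : Module.Basis ℕ R R[X] :=
  Polynomial.Sequence.basis
    { elems' n := coeff n (cskSeries v)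
      degree_eq' n := (Polynomial.degree_eq_iff_natDegree_eq
        (isMonicOfDegree_coeff_cskSeries hv n).ne_zero).2
          (isMonicOfDegree_coeff_cskSeries hv n).natDegree_eq }
    fun n => (isMonicOfDegree_coeff_cskSeries hv n).leadingCoeff_eq ▸ isUnit_one

lemma cskBasis_apply [IsDomain R] (hv : constantCoeff v = 1) (n : ℕ) :
    cskBasis hv n = coeff n (cskSeries v) :=
  Polynomial.Sequence.basis_eq_self _ _ n

theorem exists_mapCoeff_cskSeries_eq_one [IsDomain R] (hv : constantCoeff v = 1) :
    ∃ E : R[X] →ₗ[R] R, mapCoeff E.toAddMonoidHom (cskSeries v) = 1 := by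
  refine ⟨(cskBasis hv).coord 0, PowerSeries.ext fun n => ?_⟩
  simp [← cskBasis_apply hv, coeff_one, Finsupp.single_apply]

variable {E : R[X] →ₗ[R] R}

lemma mapCoeff_map_C_mul (E : R[X] →ₗ[R] R) (f : R⟦X⟧) (F : R[X]⟦X⟧) :
    mapCoeff E.toAddMonoidHom (PowerSeries.map Polynomial.C f * F) =
      f * mapCoeff E.toAddMonoidHom F :=
  mapCoeff_map_mul _ (fun b a => by simp [← Polynomial.smul_eq_C_mul]) f F

lemma mapCoeff_C_mul_cskSeries (hv : constantCoeff v = 1) (E : R[X] →ₗ[R] R) (p : R[X]) :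
    X * mapCoeff E.toAddMonoidHom (C (Polynomial.X * p) * cskSeries v) =
      (v + X ^ 2) * mapCoeff E.toAddMonoidHom (C p * cskSeries v) - C (E p) * v := by
  have hF : PowerSeries.map Polynomial.C X * (C (Polynomial.X * p) * cskSeries v) =
      PowerSeries.map Polynomial.C (v + X ^ 2) * (C p * cskSeries v) -
        PowerSeries.map Polynomial.C v * C p := by
    rw [← cskSeries_mul_cskDenom hv, cskDenom]
    simp only [map_add, map_pow, PowerSeries.map_X, map_mul]
    ring
  have h := congrArg (mapCoeff E.toAddMonoidHom) hF
  rw [map_sub, mapCoeff_map_C_mul, mapCoeff_map_C_mul, mapCoeff_map_C_mul, mapCoeff_C] at h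
  rw [h, mul_comm v]
  rfl

-- In `t W(s) - s W(t)`, where `W = cskDenom v`, the variable `x` cancels.
lemma cskSeries_gram_relation (hv : constantCoeff v = 1) :
    PowerSeries.map (PowerSeries.map Polynomial.C) (X * C v) * PowerSeries.map C (cskSeries v) -
      PowerSeries.map (PowerSeries.map Polynomial.C) (C X * PowerSeries.map C v) *
        C (cskSeries v) =
      PowerSeries.map (PowerSeries.map Polynomial.C)
          (X * C v - C X * PowerSeries.map C v + C X * X * (C X - X)) *
        (C (cskSeries v) * PowerSeries.map C (cskSeries v)) := by
  set F := cskSeries v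
  set φ : R⟦X⟧ →+* R[X]⟦X⟧ := PowerSeries.map Polynomial.C
  have hs : C F * C (cskDenom v) = C (φ v) := by rw [← map_mul, cskSeries_mul_cskDenom hv]
  have ht : PowerSeries.map C F * PowerSeries.map C (cskDenom v) = PowerSeries.map C (φ v) := by
    rw [← map_mul, cskSeries_mul_cskDenom hv]
  have hφ : PowerSeries.map φ (PowerSeries.map C v) = PowerSeries.map C (φ v) := by
    ext n : 1
    simp [φ]
  have hφX : φ X = X := PowerSeries.map_X _
  simp only [cskDenom, map_add, map_sub, map_mul, map_pow, PowerSeries.map_X, PowerSeries.map_C,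
    hφ, hφX] at hs ht ⊢
  linear_combination C X * C F * ht - X * PowerSeries.map C F * hs

theorem map_coeff_mul_coeff_cskSeries [IsDomain R] (hv : constantCoeff v = 1)
    (hE : mapCoeff E.toAddMonoidHom (cskSeries v) = 1) (i j : ℕ) :
    E (coeff i (cskSeries v) * coeff j (cskSeries v)) = coeff i (coeff j (gramKernel v)) := by
  set G := mapCoeff (mapCoeff E.toAddMonoidHom)
    (C (cskSeries v) * PowerSeries.map C (cskSeries v)) with hG
  have hrel : 1 - C X * X * hankelTail v = (1 - C X * X * hankelTail v - C X * X) * G := by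
    have h := congrArg (mapCoeff (mapCoeff E.toAddMonoidHom)) (cskSeries_gram_relation hv)
    have hmul := mapCoeff_map_mul (mapCoeff E.toAddMonoidHom) (mapCoeff_map_C_mul E)
    rw [map_sub, hmul, hmul, hmul, mapCoeff_map_C, mapCoeff_C, hE, map_one, map_one, ← hG] at h
    refine mul_left_cancel₀ C_X_sub_X_ne_zero ?_
    linear_combination (1 - G) * C_X_sub_X_mul_one_sub_hankelTail hv - h
  have hgram : G = gramKernel v := by
    refine eq_geomSeries (constantCoeff_C_X_mul_X_mul _) ?_
    linear_combination (-slopeKernel v) * hrel - (G - 1) * slopeKernel_mul_one_sub v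
  rw [← hgram]
  simp [G, coeff_C_mul]

lemma map_one_of_mapCoeff_cskSeries (hv : constantCoeff v = 1)
    (hE : mapCoeff E.toAddMonoidHom (cskSeries v) = 1) : E 1 = 1 := by
  have h := congrArg (coeff 0) hE
  rwa [coeff_mapCoeff, coeff_zero_cskSeries hv, coeff_zero_one] at h

lemma mapCoeff_C_X_mul_cskSeries (hv : constantCoeff v = 1)
    (hE : mapCoeff E.toAddMonoidHom (cskSeries v) = 1) :
    mapCoeff E.toAddMonoidHom (C Polynomial.X * cskSeries v) = X := by
  have h := mapCoeff_C_mul_cskSeries hv E 1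
  rw [map_one, one_mul, mul_one, hE, mul_one, map_one_of_mapCoeff_cskSeries hv hE, map_one,
    one_mul, add_sub_cancel_left, sq] at h
  exact X_mul_cancel h

lemma map_X_of_mapCoeff_cskSeries (hv : constantCoeff v = 1)
    (hE : mapCoeff E.toAddMonoidHom (cskSeries v) = 1) : E Polynomial.X = 0 := by
  have h := congrArg (coeff 0) (mapCoeff_C_X_mul_cskSeries hv hE)
  simpa [-coeff_zero_eq_constantCoeff, coeff_C_mul, coeff_zero_cskSeries hv] using h

lemma map_X_sq_of_mapCoeff_cskSeries (hv : constantCoeff v = 1)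
    (hE : mapCoeff E.toAddMonoidHom (cskSeries v) = 1) : E (Polynomial.X ^ 2) = 1 := by
  have h := mapCoeff_C_mul_cskSeries hv E Polynomial.X
  rw [map_X_of_mapCoeff_cskSeries hv hE, map_zero, zero_mul, sub_zero,
    mapCoeff_C_X_mul_cskSeries hv hE, mul_comm _ X, ← sq] at h
  have hv0 : coeff 0 (v + X ^ 2) = 1 := by simp [hv]
  have h0 := congrArg (coeff 0) (X_mul_cancel h)
  rwa [coeff_mapCoeff, coeff_C_mul, coeff_zero_cskSeries hv, mul_one, hv0] at h0

end GramIdentity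

/-! ### Positive semidefinite kernels -/

section PosSemidefKernel

open PowerSeries
open scoped Polynomial

/-- The `N × N` corner of the coefficient matrix of a bivariate series. -/
def coeffMatrix (N : ℕ) (K : ℝ⟦X⟧⟦X⟧) : Matrix (Fin N) (Fin N) ℝ :=
  .of fun i j => coeff (i : ℕ) (coeff (j : ℕ) K)

/-- A bivariate series `K(s, t)` is a positive semidefinite kernel if its infinite coefficient
matrix is, that is, if all the finite corners of that matrix are positive semidefinite. -/
def PosSemidefKernel (K : ℝ⟦X⟧⟦X⟧) : Prop := ∀ N, (coeffMatrix N K).PosSemidef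

variable {K L : ℝ⟦X⟧⟦X⟧}

lemma coeffMatrix_apply {N : ℕ} (i j : Fin N) :
    coeffMatrix N K i j = coeff (i : ℕ) (coeff (j : ℕ) K) := rfl

lemma posSemidefKernel_iff : PosSemidefKernel K ↔
    (∀ i j, coeff i (coeff j K) = coeff j (coeff i K)) ∧
      ∀ N (x : Fin N → ℝ), 0 ≤ ∑ i, ∑ j, x i * x j * coeff (i : ℕ) (coeff (j : ℕ) K) := by
  have hform {N : ℕ} (x : Fin N → ℝ) : star x ⬝ᵥ (coeffMatrix N K).mulVec x =
      ∑ i, ∑ j, x i * x j * coeff (i : ℕ) (coeff (j : ℕ) K) := by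
    simp only [dotProduct, Matrix.mulVec, Finset.mul_sum, star_trivial, coeffMatrix_apply]
    exact Finset.sum_congr rfl fun i _ => Finset.sum_congr rfl fun j _ => by ring
  simp only [PosSemidefKernel, Matrix.posSemidef_iff_dotProduct_mulVec, hform, forall_and]
  refine and_congr_left fun _ =>
    ⟨fun h i j => ?_, fun h N => Matrix.IsHermitian.ext fun i j => h _ _⟩
  exact ((h (max i j + 1)).apply ⟨i, by lia⟩ ⟨j, by lia⟩).symm

lemma sum_fin_ite_add_eq {M : Type*} [AddCommMonoid M] {N n : ℕ} (hn : n < N) (f : ℕ × ℕ → M) :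
    ∑ p : Fin N × Fin N, (if (p.1 : ℕ) + p.2 = n then f (p.1, p.2) else 0) =
      ∑ p ∈ Finset.HasAntidiagonal.antidiagonal n, f p := by
  rw [← Finset.sum_filter]
  refine Finset.sum_nbij (fun p => (p.1, p.2)) (by simp) ?_ (fun p hp => ?_) (fun _ _ => rfl)
  · rintro ⟨a, b⟩ _ ⟨c, d⟩ _ h
    simpa [Fin.ext_iff] using h
  · have hp' : p.1 + p.2 = n := by simpa using hp
    exact ⟨(⟨p.1, by lia⟩, ⟨p.2, by lia⟩), by simpa using hp', rfl⟩

/-- The matrix of the addition map `(a, b) ↦ a + b`, which compresses the Kronecker product of two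
coefficient matrices to the coefficient matrix of the product. -/
def additionMatrix (N : ℕ) : Matrix (Fin N) (Fin N × Fin N) ℝ :=
  .of fun i p => if (p.1 : ℕ) + p.2 = i then 1 else 0

open scoped Kronecker Matrix in
lemma coeffMatrix_mul (N : ℕ) (K L : ℝ⟦X⟧⟦X⟧) : coeffMatrix N (K * L) =
    additionMatrix N * (coeffMatrix N K ⊗ₖ coeffMatrix N L) * (additionMatrix N)ᴴ := by
  ext i j
  simp only [Matrix.mul_apply, additionMatrix, Matrix.of_apply, Matrix.conjTranspose_apply,
    apply_ite star, star_one, star_zero, Matrix.kroneckerMap_apply, coeffMatrix_apply, mul_ite,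
    mul_one, mul_zero, ite_mul, one_mul, zero_mul]
  rw [coeff_mul, ← sum_fin_ite_add_eq j.2, map_sum]
  refine Finset.sum_congr rfl fun q _ => ?_
  split_ifs
  · rw [coeff_mul, ← sum_fin_ite_add_eq i.2]
  · exact map_zero _

namespace PosSemidefKernel

lemma of_tendsto {ι : Type*} {l : Filter ι} [l.NeBot] {F : ι → ℝ⟦X⟧⟦X⟧}
    (hF : ∀ᶠ n in l, PosSemidefKernel (F n))
    (hlim : ∀ i j, Tendsto (fun n => coeff i (coeff j (F n))) l (𝓝 (coeff i (coeff j K)))) :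
    PosSemidefKernel K := by
  simp only [posSemidefKernel_iff, eventually_and] at hF ⊢
  refine ⟨fun i j => ?_, fun N x => ?_⟩
  · exact tendsto_nhds_unique_of_eventuallyEq (hlim i j) (hlim j i) (hF.1.mono fun n h => h i j)
  · exact ge_of_tendsto (tendsto_finsetSum _ fun i _ => tendsto_finsetSum _ fun j _ =>
      (hlim i j).const_mul _) (hF.2.mono fun n h => h N x)

lemma C_mul_map_C (f : ℝ⟦X⟧) : PosSemidefKernel (C f * PowerSeries.map C f) := fun N => by
  convert Matrix.posSemidef_vecMulVec_self_star fun i : Fin N => coeff (i : ℕ) f using 1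
  ext i j
  simp [coeffMatrix_apply, coeff_C_mul, Matrix.vecMulVec_apply]

lemma add (hK : PosSemidefKernel K) (hL : PosSemidefKernel L) : PosSemidefKernel (K + L) :=
  fun N => by
    convert (hK N).add (hL N) using 1
    ext i j
    simp [coeffMatrix_apply]

lemma mul (hK : PosSemidefKernel K) (hL : PosSemidefKernel L) : PosSemidefKernel (K * L) :=
  fun N => coeffMatrix_mul N K L ▸
    ((hK N).kronecker (hL N)).mul_mul_conjTranspose_same (additionMatrix N)

lemma C_C {c : ℝ} (hc : 0 ≤ c) : PosSemidefKernel (C (C c)) := by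
  rw [← Real.mul_self_sqrt hc, map_mul, map_mul]
  simpa using C_mul_map_C (C √c)

lemma one : PosSemidefKernel 1 := by simpa using C_C zero_le_one

lemma pow (hK : PosSemidefKernel K) (n : ℕ) : PosSemidefKernel (K ^ n) := by
  induction n with
  | zero => simpa using one
  | succ n ih => exact pow_succ K n ▸ ih.mul hK

lemma sum {ι : Type*} {s : Finset ι} {F : ι → ℝ⟦X⟧⟦X⟧} (hF : ∀ n ∈ s, PosSemidefKernel (F n)) :
    PosSemidefKernel (∑ n ∈ s, F n) :=
  Finset.sum_induction F PosSemidefKernel (fun _ _ => add) (by simpa using C_C le_rfl) hF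

lemma geomSeries (hK : PosSemidefKernel K) (hK0 : constantCoeff K = 0) :
    PosSemidefKernel (geomSeries K) := fun N => by
  have h : coeffMatrix N (_root_.geomSeries K) = coeffMatrix N (∑ n ∈ Finset.range N, K ^ n) := by
    ext i j
    rw [coeffMatrix_apply, coeffMatrix_apply, coeff_geomSeries hK0 j.2, map_sum (coeff (j : ℕ))]
  exact h ▸ sum (fun n _ => hK.pow n) N

lemma rescaleBoth (hK : PosSemidefKernel K) (l : ℝ) : PosSemidefKernel (rescaleBoth l K) :=
  fun N => by
    convert (hK N).mul_mul_conjTranspose_same (.diagonal fun i : Fin N => l ^ (i : ℕ)) using 1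
    ext i j
    simp [coeffMatrix_apply]
    ring

lemma C_X_mul_X_mul (hK : PosSemidefKernel K) : PosSemidefKernel (C X * X * K) :=
  mul (by simpa using C_mul_map_C X) hK

lemma of_C_X_mul_X_mul (hK : PosSemidefKernel (C X * X * K)) : PosSemidefKernel K := fun N => by
  convert (hK (N + 1)).submatrix Fin.succ using 1
  ext i j
  simp [coeffMatrix_apply, coeff_succ_coeff_succ_C_X_mul_X_mul]

lemma sub_one (hK : PosSemidefKernel K) (hK0 : constantCoeff K = 1) : PosSemidefKernel (K - 1) := by
  rw [← coeff_zero_eq_constantCoeff_apply] at hK0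
  have hsymm := (posSemidefKernel_iff.1 hK).1
  let L : ℝ⟦X⟧⟦X⟧ := mk fun j => mk fun i => coeff (i + 1) (coeff (j + 1) K)
  have hKL : K - 1 = C X * X * L := by
    ext j i
    rcases j with _ | j
    · simp [-coeff_zero_eq_constantCoeff, hK0, mul_assoc, coeff_C_mul, coeff_zero_X_mul]
    · rcases i with _ | i
      · simp [-coeff_zero_eq_constantCoeff, hsymm 0, hK0, mul_assoc, coeff_C_mul, coeff_one,
          coeff_zero_X_mul]
      · simp [-coeff_zero_eq_constantCoeff, coeff_succ_coeff_succ_C_X_mul_X_mul, coeff_one, L]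
  rw [hKL]
  refine C_X_mul_X_mul fun N => ?_
  convert (hK (N + 1)).submatrix Fin.succ using 1
  ext i j
  simp [coeffMatrix_apply, L]

-- `K` is the limit of `(geomSeries (ε K) - 1) / ε` as `ε → 0`.
lemma of_geomSeries (hK0 : constantCoeff K = 0)
    (hK : ∀ ε > 0, PosSemidefKernel (_root_.geomSeries (C (C ε) * K))) : PosSemidefKernel K := by
  have hεK (ε : ℝ) : constantCoeff (C (C ε) * K) = 0 := by simp [hK0]
  refine of_tendsto (l := 𝓝[>] (0 : ℝ))
    (F := fun ε => C (C ε⁻¹) * (_root_.geomSeries (C (C ε) * K) - 1)) ?_ fun i j => ?_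
  · filter_upwards [self_mem_nhdsWithin] with ε hε
    exact (C_C (inv_nonneg.2 (Set.mem_Ioi.1 hε).le)).mul
      ((hK ε hε).sub_one (constantCoeff_geomSeries _))
  have hlim : Tendsto
      (fun ε : ℝ => ∑ n ∈ Finset.range (j + 1), ε ^ n * coeff i (coeff j (K ^ (n + 1))))
      (𝓝[>] 0) (𝓝 (coeff i (coeff j K))) := by
    refine Tendsto.mono_left (Continuous.tendsto' (by fun_prop) _ _ ?_) nhdsWithin_le_nhds
    simp [Finset.sum_range_succ']
  refine hlim.congr' ?_
  filter_upwards [self_mem_nhdsWithin] with ε hε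
  have hpow (n : ℕ) : ε⁻¹ * coeff i (coeff j ((C (C ε) * K) ^ (n + 1))) =
      ε ^ n * coeff i (coeff j (K ^ (n + 1))) := by
    rw [mul_pow, ← map_pow, ← map_pow, coeff_C_mul, coeff_C_mul, pow_succ']
    field_simp [(Set.mem_Ioi.1 hε).ne']
  simp only [coeff_C_mul, map_sub, coeff_geomSeries (hεK ε) (j.lt_add_one.trans (j + 1).lt_add_one),
    Finset.sum_range_succ' _ (j + 1), pow_zero, add_sub_cancel_right, map_sum, Finset.mul_sum, hpow]

end PosSemidefKernel
end PosSemidefKernel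

section SlopeKernel

open PowerSeries
open scoped Polynomial

variable {v : ℝ⟦X⟧}

lemma posSemidefKernel_gramKernel_rescale_iff :
    (∀ l, PosSemidefKernel (gramKernel (rescale l v))) ↔ PosSemidefKernel (slopeKernel v) := by
  refine ⟨fun h => .of_C_X_mul_X_mul
    (.of_geomSeries (constantCoeff_C_X_mul_X_mul _) fun ε hε => ?_), fun h l => ?_⟩
  · have hgram := (h (√ε)⁻¹).rescaleBoth √ε
    rwa [rescaleBoth_gramKernel, rescale_rescale, inv_mul_cancel₀ (Real.sqrt_pos.2 hε).ne',
      rescale_one, RingHom.id_apply, Real.sq_sqrt hε.le] at hgram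
  · have hslope : PosSemidefKernel (slopeKernel (rescale l v)) :=
      slopeKernel_rescale l v ▸ h.rescaleBoth l
    exact hslope.C_X_mul_X_mul.geomSeries (constantCoeff_C_X_mul_X_mul _)

lemma PosSemidefKernel.slopeKernel_affine (h : PosSemidefKernel (slopeKernel v)) {c : ℝ}
    (hc : 1 ≤ c) : PosSemidefKernel (slopeKernel (C c * v + C (1 - c))) := by
  have hsub := h.sub_one (constantCoeff_slopeKernel v)
  have hZ : constantCoeff (C (C (c - 1)) * (slopeKernel v - 1)) = 0 := by
    simp [constantCoeff_slopeKernel]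
  exact _root_.slopeKernel_affine v c ▸
    h.mul (((C_C (sub_nonneg.2 hc)).mul hsub).geomSeries hZ)

theorem posSemidefKernel_gramKernel_iff (hv : constantCoeff v = 1) {E : ℝ[X] →ₗ[ℝ] ℝ}
    (hE : mapCoeff E.toAddMonoidHom (cskSeries v) = 1) :
    PosSemidefKernel (gramKernel v) ↔ ∀ q, 0 ≤ E (q * q) := by
  have hexpand {N : ℕ} (x : Fin N → ℝ) :
      E ((∑ i : Fin N, x i • cskBasis hv i) * ∑ i : Fin N, x i • cskBasis hv i) =
        ∑ i, ∑ j, x i * x j * coeff (i : ℕ) (coeff (j : ℕ) (gramKernel v)) := by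
    simp only [Finset.sum_mul_sum, map_sum, smul_mul_smul_comm, map_smul, smul_eq_mul,
      cskBasis_apply, map_coeff_mul_coeff_cskSeries hv hE]
  refine posSemidefKernel_iff.trans ⟨fun h q => ?_, fun h => ⟨fun i j => ?_, fun N x => ?_⟩⟩
  · obtain ⟨N, hN⟩ := ((cskBasis hv).repr q).support.exists_nat_subset_range
    have hq : ∑ i : Fin N, (cskBasis hv).repr q i • cskBasis hv i = q := by
      rw [Fin.sum_univ_eq_sum_range fun i => (cskBasis hv).repr q i • cskBasis hv i,
        ← Finsupp.sum_of_support_subset _ hN (fun i a => a • cskBasis hv i) (by simp)]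
      exact (cskBasis hv).linearCombination_repr q
    rw [← hq, hexpand]
    exact h.2 N _
  · simp only [← map_coeff_mul_coeff_cskSeries hv hE, mul_comm]
  · exact hexpand x ▸ h _

end SlopeKernel

/-! ### Maclaurin series and coefficient bounds -/

section MaclaurinSeries

open PowerSeries

/-- `f` is the sum of the power series `a` near `0`. -/
def HasMaclaurinSeries (f : ℝ → ℝ) (a : ℝ⟦X⟧) : Prop :=
  ∀ᶠ m in 𝓝 0, HasSum (fun n => coeff n a * m ^ n) (f m)

variable {f g : ℝ → ℝ} {a b u : ℝ⟦X⟧}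

lemma hasMaclaurinSeries_iff_hasFPowerSeriesAt : HasMaclaurinSeries f a ↔
    HasFPowerSeriesAt f (.ofScalars ℝ fun n => coeff n a) 0 := by
  simp only [HasMaclaurinSeries, hasFPowerSeriesAt_iff, FormalMultilinearSeries.coeff_ofScalars,
    smul_eq_mul, zero_add, mul_comm]

lemma exists_hasMaclaurinSeries_of_analyticAt (hf : AnalyticAt ℝ f 0) :
    ∃ a, HasMaclaurinSeries f a := by
  obtain ⟨p, hp⟩ := hf
  refine ⟨mk p.coeff, (hasFPowerSeriesAt_iff.1 hp).mono fun m hm => ?_⟩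
  simpa [mul_comm] using hm

lemma hasSum_coeff_X_pow_mul_pow (k : ℕ) (m : ℝ) :
    HasSum (fun n => coeff n ((X : ℝ⟦X⟧) ^ k) * m ^ n) (m ^ k) := by
  simpa using hasSum_single (f := fun n => coeff n ((X : ℝ⟦X⟧) ^ k) * m ^ n) k
    fun n hn => by simp [coeff_X_pow, hn]

lemma hasMaclaurinSeries_one : HasMaclaurinSeries (fun _ => 1) 1 :=
  Eventually.of_forall fun m => by simpa only [pow_zero] using hasSum_coeff_X_pow_mul_pow 0 m

lemma hasMaclaurinSeries_X : HasMaclaurinSeries (fun m => m) X :=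
  Eventually.of_forall fun m => by simpa only [pow_one] using hasSum_coeff_X_pow_mul_pow 1 m

namespace HasMaclaurinSeries

lemma analyticAt (hf : HasMaclaurinSeries f a) : AnalyticAt ℝ f 0 :=
  (hasMaclaurinSeries_iff_hasFPowerSeriesAt.1 hf).analyticAt

lemma congr (hf : HasMaclaurinSeries f a) (hfg : f =ᶠ[𝓝 0] g) : HasMaclaurinSeries g a := by
  filter_upwards [hf, hfg] with m hm hfg using hfg ▸ hm

lemma unique (ha : HasMaclaurinSeries f a) (hb : HasMaclaurinSeries f b) : a = b := by
  rw [hasMaclaurinSeries_iff_hasFPowerSeriesAt] at ha hb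
  have h := (FormalMultilinearSeries.ofScalars_series_eq_iff ..).1
    (ha.eq_formalMultilinearSeries hb)
  exact PowerSeries.ext fun n => congrFun h n

lemma apply_zero (hf : HasMaclaurinSeries f a) : f 0 = constantCoeff a := by
  have h := hf.self_of_nhds.unique (hasSum_single 0 fun n hn => by simp [hn])
  simpa using h

lemma comp_const_mul (hf : HasMaclaurinSeries f a) (l : ℝ) :
    HasMaclaurinSeries (fun m => f (l * m)) (rescale l a) := by
  have hl : Tendsto (fun m => l * m) (𝓝 0) (𝓝 0) := Continuous.tendsto' (by fun_prop) _ _ (by simp)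
  refine (hl.eventually hf).mono fun m hm => hm.congr_fun fun n => ?_
  rw [coeff_rescale]
  ring

lemma add (hf : HasMaclaurinSeries f a) (hg : HasMaclaurinSeries g b) :
    HasMaclaurinSeries (fun m => f m + g m) (a + b) := by
  filter_upwards [hf, hg] with m hf hg
  simpa [add_mul] using hf.add hg

lemma const_mul (hf : HasMaclaurinSeries f a) (c : ℝ) :
    HasMaclaurinSeries (fun m => c * f m) (C c * a) :=
  hf.mono fun m hm => by simpa [mul_assoc] using hm.mul_left c

lemma const_mul_sub_add_one (hf : HasMaclaurinSeries f a) (c : ℝ) :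
    HasMaclaurinSeries (fun m => c * f m - c + 1) (C c * a + C (1 - c)) := by
  have hfun : (fun m => c * f m - c + 1) = fun m => c * f m + (1 - c) * 1 := by
    ext m
    ring
  rw [hfun, ← mul_one (C (1 - c))]
  exact (hf.const_mul c).add (hasMaclaurinSeries_one.const_mul (1 - c))

lemma exists_abs_coeff_le (hf : HasMaclaurinSeries f a) (ha : |constantCoeff a| ≤ 1) :
    ∃ R, ∀ n, |coeff n a| ≤ R ^ n := by
  obtain ⟨m, hm, hm0 : 0 < m⟩ := ((Eventually.filter_mono nhdsWithin_le_nhds hf).and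
    (self_mem_nhdsWithin : Set.Ioi (0 : ℝ) ∈ 𝓝[>] 0)).exists
  set B := ∑' n, |coeff n a * m ^ n|
  have hB : 0 ≤ B := tsum_nonneg fun n => abs_nonneg _
  refine ⟨(B + 1) / m, fun n => ?_⟩
  rcases Nat.eq_zero_or_pos n with rfl | hn
  · simpa using ha
  rw [div_pow, le_div_iff₀ (by positivity)]
  calc |coeff n a| * m ^ n = |coeff n a * m ^ n| := by rw [abs_mul, abs_of_pos (pow_pos hm0 n)]
    _ ≤ B := hm.summable.abs.le_tsum n fun _ _ => abs_nonneg _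
    _ ≤ B + 1 := (lt_add_one B).le
    _ ≤ (B + 1) ^ n := le_self_pow₀ (by linarith) hn.ne'

end HasMaclaurinSeries

lemma hasSum_coeff_mul {m A B : ℝ} (ha : HasSum (fun n => coeff n a * m ^ n) A)
    (hb : HasSum (fun n => coeff n b * m ^ n) B) :
    HasSum (fun n => coeff n (a * b) * m ^ n) (A * B) := by
  have h := (summable_norm_sum_mul_antidiagonal_of_summable_norm ha.summable.norm
    hb.summable.norm).of_norm.hasSum
  rw [← tsum_mul_tsum_eq_tsum_sum_antidiagonal_of_summable_norm ha.summable.norm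
    hb.summable.norm, ha.tsum_eq, hb.tsum_eq] at h
  refine h.congr_fun fun n => ?_
  rw [coeff_mul, Finset.sum_mul]
  refine Finset.sum_congr rfl fun p hp => ?_
  rw [← Finset.HasAntidiagonal.mem_antidiagonal.1 hp]
  ring

lemma nonneg_of_abs_coeff_le {R : ℝ} (ha : ∀ n, |coeff n a| ≤ R ^ n) : 0 ≤ R := by
  simpa using (abs_nonneg _).trans (ha 1)

lemma summable_coeff_mul_pow {m S : ℝ} (hu : ∀ n, |coeff n u| ≤ S ^ n) (hm : S * |m| < 1) :
    Summable fun n => coeff n u * m ^ n := by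
  have hS := nonneg_of_abs_coeff_le hu
  refine .of_norm_bounded (summable_geometric_of_lt_one (by positivity) hm) fun n => ?_
  rw [Real.norm_eq_abs, abs_mul, abs_pow, mul_pow]
  gcongr
  exact hu n

lemma abs_coeff_mul_le {T B : ℝ} (ha : ∀ n, |coeff n a| ≤ T ^ n)
    (hb : ∀ n, |coeff n b| ≤ B * (2 * T) ^ n) (n : ℕ) :
    |coeff n (a * b)| ≤ 2 * B * (2 * T) ^ n := by
  have hT := nonneg_of_abs_coeff_le ha
  have hB : 0 ≤ B := by simpa using (abs_nonneg _).trans (hb 0)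
  have hgeom : ∑ i ∈ Finset.range (n + 1), (2 : ℝ) ^ i ≤ 2 * 2 ^ n := by
    rw [geom_sum_eq (by norm_num)]
    linarith [pow_succ (2 : ℝ) n]
  rw [mul_comm a b, coeff_mul, Finset.Nat.sum_antidiagonal_eq_sum_range_succ
    (fun i j => coeff i b * coeff j a)]
  calc |∑ i ∈ Finset.range (n + 1), coeff i b * coeff (n - i) a|
    _ ≤ ∑ i ∈ Finset.range (n + 1), B * T ^ n * 2 ^ i := by
      refine (Finset.abs_sum_le_sum_abs _ _).trans (Finset.sum_le_sum fun i hi => ?_)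
      have hpow : T ^ n = T ^ i * T ^ (n - i) := by
        rw [← pow_add, Nat.add_sub_cancel' (Finset.mem_range_succ_iff.1 hi)]
      calc |coeff i b * coeff (n - i) a| = |coeff i b| * |coeff (n - i) a| := abs_mul _ _
        _ ≤ B * (2 * T) ^ i * T ^ (n - i) := by gcongr; exacts [hb i, ha _]
        _ = B * T ^ n * 2 ^ i := by rw [hpow]; ring
    _ ≤ B * T ^ n * (2 * 2 ^ n) := by rw [← Finset.mul_sum]; gcongr
    _ = 2 * B * (2 * T) ^ n := by ring

lemma abs_coeff_le_of_mul_eq {R : ℝ} (ha0 : constantCoeff a = 1) (ha : ∀ n, |coeff n a| ≤ R ^ n)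
    (hb : ∀ n, |coeff n b| ≤ R ^ n) (hu : u * a = b) (n : ℕ) : |coeff n u| ≤ (3 * R) ^ n := by
  have hR := nonneg_of_abs_coeff_le ha
  induction n using Nat.strong_induction_on with
  | _ n ih =>
  have hrec : coeff n u = coeff n b - ∑ i ∈ Finset.range n, coeff i u * coeff (n - i) a := by
    rw [← hu, coeff_mul, Finset.Nat.sum_antidiagonal_eq_sum_range_succ
      (fun i j => coeff i u * coeff j a), Finset.sum_range_succ]
    simp [ha0]
  have hterm : ∀ i ∈ Finset.range n, |coeff i u * coeff (n - i) a| ≤ R ^ n * 3 ^ i := by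
    intro i hi
    have hi := Finset.mem_range.1 hi
    calc |coeff i u * coeff (n - i) a| = |coeff i u| * |coeff (n - i) a| := abs_mul _ _
      _ ≤ (3 * R) ^ i * R ^ (n - i) := by gcongr; exacts [ih i hi, ha _]
      _ = R ^ n * 3 ^ i := by
        rw [mul_pow, mul_assoc, ← pow_add, Nat.add_sub_cancel' hi.le, mul_comm]
  have hgeom : 1 + ∑ i ∈ Finset.range n, (3 : ℝ) ^ i ≤ 3 ^ n := by
    rw [geom_sum_eq (by norm_num)]
    linarith [one_le_pow₀ (n := n) (by norm_num : (1 : ℝ) ≤ 3)]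
  calc |coeff n u|
    _ ≤ |coeff n b| + ∑ i ∈ Finset.range n, |coeff i u * coeff (n - i) a| :=
      hrec ▸ (abs_sub _ _).trans (add_le_add_right (Finset.abs_sum_le_sum_abs _ _) _)
    _ ≤ R ^ n + ∑ i ∈ Finset.range n, R ^ n * 3 ^ i :=
      add_le_add (hb n) (Finset.sum_le_sum hterm)
    _ = R ^ n * (1 + ∑ i ∈ Finset.range n, 3 ^ i) := by rw [← Finset.mul_sum]; ring
    _ ≤ R ^ n * 3 ^ n := by gcongr
    _ = (3 * R) ^ n := by rw [mul_pow, mul_comm]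

lemma hasSum_div_of_mul_eq {S m A B : ℝ} (hu : ∀ n, |coeff n u| ≤ S ^ n) (hm : S * |m| < 1)
    (ha : HasSum (fun n => coeff n a * m ^ n) A) (hb : HasSum (fun n => coeff n b * m ^ n) B)
    (hA : A ≠ 0) (hmul : u * a = b) : HasSum (fun n => coeff n u * m ^ n) (B / A) := by
  have hsum := (summable_coeff_mul_pow hu hm).hasSum
  have hB : HasSum (fun n => coeff n b * m ^ n) ((∑' n, coeff n u * m ^ n) * A) :=
    hmul ▸ hasSum_coeff_mul hsum ha
  rwa [hb.unique hB, mul_div_cancel_right₀ _ hA]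

lemma abs_coeff_add_sq_sub_le {v : ℝ⟦X⟧} {R : ℝ} (hv : ∀ n, |coeff n v| ≤ R ^ n) (x : ℝ) (n : ℕ) :
    |coeff n (v + X ^ 2 - C x * X)| ≤ (R + 1 + |x|) ^ n := by
  have hR := nonneg_of_abs_coeff_le hv
  have hx := abs_nonneg x
  have hvn := hv n
  simp only [map_sub, map_add, coeff_C_mul, coeff_X_pow, coeff_X]
  match n with
  | 0 => simpa using hvn
  | 1 =>
    calc |coeff 1 v + _ - x * _| ≤ |coeff 1 v| + |x| := by simpa using abs_sub (coeff 1 v) x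
      _ ≤ (R + 1 + |x|) ^ 1 := by linarith
  | 2 =>
    calc |coeff 2 v + _ - x * _| ≤ |coeff 2 v| + 1 := by simpa using abs_add_le (coeff 2 v) 1
      _ ≤ R ^ 2 + 1 := by gcongr
      _ ≤ (R + 1 + |x|) ^ 2 := by nlinarith [mul_nonneg hR hx]
  | n + 3 =>
    calc |coeff (n + 3) v + _ - x * _| = |coeff (n + 3) v| := by simp
      _ ≤ R ^ (n + 3) := hvn
      _ ≤ (R + 1 + |x|) ^ (n + 3) := by gcongr; linarith

end MaclaurinSeries

section KernelExpansion

open PowerSeries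
open scoped Polynomial

variable {v : ℝ⟦X⟧} {E : ℝ[X] →ₗ[ℝ] ℝ} {R : ℝ}

lemma coeff_zero_mapCoeff_C_mul_cskSeries (hv : constantCoeff v = 1) (p : ℝ[X]) :
    coeff 0 (mapCoeff E.toAddMonoidHom (C p * cskSeries v)) = E p := by
  rw [coeff_mapCoeff, coeff_C_mul, coeff_zero_cskSeries hv, mul_one]
  rfl

lemma coeff_mapCoeff_C_X_pow_succ_mul_cskSeries (hv : constantCoeff v = 1) (n i : ℕ) :
    coeff i (mapCoeff E.toAddMonoidHom (C (Polynomial.X ^ (n + 1)) * cskSeries v)) =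
      coeff (i + 1)
          ((v + X ^ 2) * mapCoeff E.toAddMonoidHom (C (Polynomial.X ^ n) * cskSeries v)) -
        E (Polynomial.X ^ n) * coeff (i + 1) v := by
  have h := congrArg (coeff (i + 1)) (mapCoeff_C_mul_cskSeries hv E (Polynomial.X ^ n))
  rwa [coeff_succ_X_mul, ← pow_succ', map_sub, coeff_C_mul] at h

lemma abs_coeff_mapCoeff_C_X_pow_mul_cskSeries_le (hv : constantCoeff v = 1)
    (hE : mapCoeff E.toAddMonoidHom (cskSeries v) = 1)
    (hvR : ∀ n, |coeff n v| ≤ R ^ n) (n i : ℕ) :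
    |coeff i (mapCoeff E.toAddMonoidHom (C (Polynomial.X ^ n) * cskSeries v))| ≤
      (6 * (R + 1)) ^ n * (2 * (R + 1)) ^ i := by
  have hw (k : ℕ) : |coeff k (v + X ^ 2)| ≤ (R + 1) ^ k := by
    simpa using abs_coeff_add_sq_sub_le hvR 0 k
  set T := R + 1
  have hT := nonneg_of_abs_coeff_le hw
  induction n generalizing i with
  | zero =>
    rw [pow_zero, map_one, one_mul, hE, pow_zero, one_mul, coeff_one]
    split_ifs with hi
    · simp [hi]
    · simp only [abs_zero]
      positivity
  | succ n ih =>
    have hEn : |E (Polynomial.X ^ n)| ≤ (6 * T) ^ n := by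
      simpa only [coeff_zero_mapCoeff_C_mul_cskSeries hv, pow_zero, mul_one] using ih 0
    have hvi : |coeff (i + 1) v| ≤ (2 * T) ^ (i + 1) := (hvR _).trans (by
      have hR := nonneg_of_abs_coeff_le hvR
      gcongr
      linarith)
    rw [coeff_mapCoeff_C_X_pow_succ_mul_cskSeries hv]
    calc |_ - E (Polynomial.X ^ n) * coeff (i + 1) v|
      _ ≤ 2 * (6 * T) ^ n * (2 * T) ^ (i + 1) + |E (Polynomial.X ^ n)| * |coeff (i + 1) v| :=
        (abs_sub _ _).trans (add_le_add (abs_coeff_mul_le hw ih _) (abs_mul _ _).le)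
      _ ≤ 2 * (6 * T) ^ n * (2 * T) ^ (i + 1) + (6 * T) ^ n * (2 * T) ^ (i + 1) := by gcongr
      _ = (6 * T) ^ (n + 1) * (2 * T) ^ i := by ring

lemma abs_map_X_pow_le (hv : constantCoeff v = 1)
    (hE : mapCoeff E.toAddMonoidHom (cskSeries v) = 1)
    (hvR : ∀ n, |coeff n v| ≤ R ^ n) (n : ℕ) : |E (Polynomial.X ^ n)| ≤ (6 * (R + 1)) ^ n := by
  simpa only [coeff_zero_mapCoeff_C_mul_cskSeries hv, pow_zero, mul_one] using
    abs_coeff_mapCoeff_C_X_pow_mul_cskSeries_le hv hE hvR n 0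

lemma map_evalRingHom_map_C {S : Type*} [CommRing S] (x : S) (f : S⟦X⟧) :
    PowerSeries.map (Polynomial.evalRingHom x) (PowerSeries.map Polynomial.C f) = f := by
  ext n
  simp

lemma map_evalRingHom_cskSeries_mul (hv : constantCoeff v = 1) (x : ℝ) :
    PowerSeries.map (Polynomial.evalRingHom x) (cskSeries v) * (v + X ^ 2 - C x * X) = v := by
  have h := congrArg (PowerSeries.map (Polynomial.evalRingHom x)) (cskSeries_mul_cskDenom hv)
  simpa [cskDenom, map_evalRingHom_map_C] using h

lemma abs_eval_coeff_cskSeries_le (hv : constantCoeff v = 1) (hvR : ∀ n, |coeff n v| ≤ R ^ n)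
    {ρ x : ℝ} (hx : |x| ≤ ρ) (n : ℕ) :
    |(coeff n (cskSeries v)).eval x| ≤ (3 * (R + 1 + ρ)) ^ n := by
  have hR := nonneg_of_abs_coeff_le hvR
  have h := abs_coeff_le_of_mul_eq (R := R + 1 + |x|) (by simp [hv])
    (abs_coeff_add_sq_sub_le hvR x)
    (fun k => (hvR k).trans (by gcongr; linarith [abs_nonneg x]))
    (map_evalRingHom_cskSeries_mul hv x) n
  rw [coeff_map, Polynomial.coe_evalRingHom] at h
  exact h.trans (by gcongr)

variable {V : ℝ → ℝ}

lemma eventually_lt_cskKernel_denom (hV : ContinuousAt V 0) {δ : ℝ} (hδ : δ < V 0) (ρ : ℝ) :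
    ∀ᶠ m in 𝓝 0, ∀ x, |x| ≤ ρ → δ < V m + m * (m - x) := by
  have hcont : ContinuousAt (fun m => V m - |m| * (|m| + ρ)) 0 := by fun_prop
  filter_upwards [hcont.eventually (lt_mem_nhds (by simpa using hδ))] with m hm x hx
  have h : |m * (m - x)| ≤ |m| * (|m| + ρ) := by
    rw [abs_mul]
    gcongr
    exact (abs_sub _ _).trans (by gcongr)
  linarith [neg_abs_le (m * (m - x))]

lemma HasMaclaurinSeries.hasSum_cskKernel (hV : HasMaclaurinSeries V v) (hv : constantCoeff v = 1)
    (hvR : ∀ n, |coeff n v| ≤ R ^ n) (ρ : ℝ) :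
    ∀ᶠ m in 𝓝 0, ∀ x, |x| ≤ ρ →
      HasSum (fun n => (coeff n (cskSeries v)).eval x * m ^ n) (cskKernel V m x) := by
  have hV0 : 0 < V 0 := by simp [hV.apply_zero, hv]
  have hsmall : ∀ᶠ m : ℝ in 𝓝 0, 3 * (R + 1 + ρ) * |m| < 1 :=
    (Continuous.tendsto' (by fun_prop) 0 0 (by simp)).eventually_lt_const one_pos
  filter_upwards [hV, hsmall, eventually_lt_cskKernel_denom hV.analyticAt.continuousAt hV0 ρ]
    with m hVm hm hden x hx
  have hdenom : HasSum (fun n => coeff n (v + X ^ 2 - C x * X) * m ^ n) (V m + m * (m - x)) := by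
    rw [(by ring : V m + m * (m - x) = V m + m ^ 2 - x * m ^ 1)]
    refine ((hVm.add (hasSum_coeff_X_pow_mul_pow 2 m)).sub
      ((hasSum_coeff_X_pow_mul_pow 1 m).mul_left x)).congr_fun fun n => ?_
    rw [map_sub, map_add, coeff_C_mul, pow_one]
    ring
  have h := hasSum_div_of_mul_eq (u := PowerSeries.map (Polynomial.evalRingHom x) (cskSeries v))
    (fun n => by simpa using abs_eval_coeff_cskSeries_le hv hvR hx n) hm hdenom hVm
    (hden x hx).ne' (map_evalRingHom_cskSeries_mul hv x)
  simpa [cskKernel] using h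

end KernelExpansion

/-! ### Variance functions and their series -/

section CSKIntegral

open PowerSeries
open scoped Polynomial

variable {ν : Measure ℝ} {ρ : ℝ}

lemma ae_abs_le_of_measure_compl_Icc (hν : ν (Set.Icc (-ρ) ρ)ᶜ = 0) : ∀ᵐ x ∂ν, |x| ≤ ρ := by
  filter_upwards [measure_eq_zero_iff_ae_notMem.1 hν] with x hx
  exact abs_le.2 (not_not.1 hx)

lemma integrable_eval [IsFiniteMeasure ν] (hν : ν (Set.Icc (-ρ) ρ)ᶜ = 0) (p : ℝ[X]) :
    Integrable (fun x => p.eval x) ν := by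
  obtain ⟨B, hB⟩ := (isCompact_Icc (a := -ρ) (b := ρ)).exists_bound_of_continuousOn
    p.continuous.continuousOn
  exact .of_bound p.continuous.aestronglyMeasurable B
    ((ae_abs_le_of_measure_compl_Icc hν).mono fun x hx => hB x (abs_le.1 hx))

lemma exists_linearMap_integral_eval [IsFiniteMeasure ν] (hν : ν (Set.Icc (-ρ) ρ)ᶜ = 0) :
    ∃ E : ℝ[X] →ₗ[ℝ] ℝ, ∀ p : ℝ[X], ∫ x, p.eval x ∂ν = E p :=
  ⟨{  toFun p := ∫ x, p.eval x ∂ν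
      map_add' p q := by
        simpa using integral_add (integrable_eval hν p) (integrable_eval hν q)
      map_smul' c p := by simp [integral_const_mul] }, fun _ => rfl⟩

variable {V : ℝ → ℝ} {v : ℝ⟦X⟧} {E : ℝ[X] →ₗ[ℝ] ℝ}

lemma HasMaclaurinSeries.integral_eval_mul_cskKernel [IsFiniteMeasure ν]
    (hV : HasMaclaurinSeries V v) (hv : constantCoeff v = 1) (hν : ν (Set.Icc (-ρ) ρ)ᶜ = 0)
    (hE : ∀ p : ℝ[X], ∫ x, p.eval x ∂ν = E p) (p : ℝ[X]) :
    HasMaclaurinSeries (fun m => ∫ x, p.eval x * cskKernel V m x ∂ν)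
      (mapCoeff E.toAddMonoidHom (C p * cskSeries v)) := by
  obtain ⟨R, hvR⟩ := hV.exists_abs_coeff_le (by simp [hv])
  obtain ⟨B, hB⟩ := (isCompact_Icc (a := -ρ) (b := ρ)).exists_bound_of_continuousOn
    p.continuous.continuousOn
  set S := 3 * (R + 1 + ρ)
  have hsmall : ∀ᶠ m : ℝ in 𝓝 0, ‖S * |m|‖ < 1 :=
    (Continuous.tendsto' (by fun_prop) 0 0 (by simp)).eventually_lt_const one_pos
  filter_upwards [hV.hasSum_cskKernel hv hvR ρ, hsmall] with m hm hSm
  have hgeom := (summable_geometric_of_norm_lt_one hSm).mul_left B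
  have hsum := hasSum_integral_of_dominated_convergence (μ := ν)
    (F := fun n x => p.eval x * ((coeff n (cskSeries v)).eval x * m ^ n))
    (f := fun x => p.eval x * cskKernel V m x) (fun n _ => B * (S * |m|) ^ n)
    (fun n => by fun_prop) (fun n => ?_) (.of_forall fun _ => hgeom) (integrable_const _) ?_
  · refine hsum.congr_fun fun n => ?_
    rw [coeff_mapCoeff, coeff_C_mul]
    simp only [← mul_assoc, ← Polynomial.eval_mul, integral_mul_const, hE]
    rfl
  · filter_upwards [ae_abs_le_of_measure_compl_Icc hν] with x hx
    rw [Real.norm_eq_abs, abs_mul, abs_mul, abs_pow, mul_pow]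
    have hpx : |p.eval x| ≤ B := hB x (abs_le.1 hx)
    have hB0 : 0 ≤ B := (abs_nonneg _).trans hpx
    gcongr
    exact abs_eval_coeff_cskSeries_le hv hvR hx n
  · filter_upwards [ae_abs_le_of_measure_compl_Icc hν] with x hx using (hm x hx).mul_left _

theorem isCSKVarianceFun_iff [IsFiniteMeasure ν] (hV : HasMaclaurinSeries V v)
    (hv : constantCoeff v = 1) (hν : ν (Set.Icc (-ρ) ρ)ᶜ = 0)
    (hE : ∀ p : ℝ[X], ∫ x, p.eval x ∂ν = E p) :
    IsCSKVarianceFun ν V ↔ mapCoeff E.toAddMonoidHom (cskSeries v) = 1 := by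
  have hmass := hV.integral_eval_mul_cskKernel hv hν hE 1
  have hmean := hV.integral_eval_mul_cskKernel hv hν hE Polynomial.X
  simp only [Polynomial.eval_one, one_mul, map_one, Polynomial.eval_X] at hmass hmean
  have hV0 : 0 < V 0 := by simp [hV.apply_zero, hv]
  refine ⟨fun ⟨_, _, ε, hε, h⟩ => hmass.unique (hasMaclaurinSeries_one.congr ?_), fun h => ?_⟩
  · exact Metric.eventually_nhds_iff.2 ⟨ε, hε, fun m hm => (h m (by simpa using hm)).2.1.symm⟩
  rw [h] at hmass
  rw [mapCoeff_C_X_mul_cskSeries hv h] at hmean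
  refine ⟨hV.analyticAt, hV0, ?_⟩
  have hVpos : ∀ᶠ m in 𝓝 0, 0 < V m := hV.analyticAt.continuousAt.eventually (lt_mem_nhds hV0)
  obtain ⟨ε, hε, hball⟩ := Metric.eventually_nhds_iff.1 (((hVpos.and
    (eventually_lt_cskKernel_denom hV.analyticAt.continuousAt hV0 ρ)).and hmass).and
      (hmean.and (hasMaclaurinSeries_one.and hasMaclaurinSeries_X)))
  refine ⟨ε, hε, fun m hm => ?_⟩
  obtain ⟨⟨⟨hpos, hden⟩, hmass⟩, hmean, hone, hX⟩ := hball (by simpa using hm)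
  refine ⟨?_, hmass.unique hone, hmean.unique hX⟩
  filter_upwards [ae_abs_le_of_measure_compl_Icc hν] with x hx
  exact div_nonneg hpos.le (hden x hx).le

lemma integral_sq_mul_cskKernel {m : ℝ} (hm : m ≠ 0) (hint : Integrable (fun x => x) ν)
    (hmean : ∫ x, x ∂ν = 0) (hden : ∀ᵐ x ∂ν, V m + m * (m - x) ≠ 0)
    (h : ∫ x, x * cskKernel V m x ∂ν = m) :
    ∫ x, x ^ 2 * cskKernel V m x ∂ν = V m + m ^ 2 := by
  have hxf : Integrable (fun x => x * cskKernel V m x) ν := .of_integral_ne_zero (by rwa [h])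
  have hpoint : ∀ᵐ x ∂ν, m * (x ^ 2 * cskKernel V m x) =
      (V m + m ^ 2) * (x * cskKernel V m x) - V m * x := by
    filter_upwards [hden] with x hx
    rw [cskKernel]
    field_simp
    ring
  refine mul_left_cancel₀ hm ?_
  rw [← integral_const_mul, integral_congr_ae hpoint,
    integral_sub (hxf.const_mul _) (hint.const_mul _), integral_const_mul, integral_const_mul, h,
    hmean]
  ring

lemma eventually_abs_cskKernel_le (hV : ContinuousAt V 0) (hV0 : 0 < V 0) (ρ : ℝ) :
    ∀ᶠ m in 𝓝 0, ∀ x, |x| ≤ ρ → |cskKernel V m x| ≤ 4 := by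
  filter_upwards [eventually_lt_cskKernel_denom hV (half_lt_self hV0) ρ,
    hV.abs.eventually (gt_mem_nhds (by rw [abs_of_pos hV0]; linarith : |V 0| < 2 * V 0))]
    with m hden hVm x hx
  have hpos : 0 < V m + m * (m - x) := (half_pos hV0).trans (hden x hx)
  rw [cskKernel, abs_div, abs_of_pos hpos, div_le_iff₀ hpos]
  linarith [hden x hx]

lemma tendsto_cskKernel (hV : ContinuousAt V 0) (hV0 : V 0 ≠ 0) (x : ℝ) :
    Tendsto (fun m => cskKernel V m x) (𝓝 0) (𝓝 1) := by
  have h : ContinuousAt (fun m => cskKernel V m x) 0 := by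
    unfold cskKernel
    exact hV.div (by fun_prop) (by simpa)
  simpa [ContinuousAt, cskKernel, hV0] using h

theorem IsCSKVarianceFun.apply_zero (hν : IsCSKGenerator ν) (h : IsCSKVarianceFun ν V) :
    V 0 = ∫ x, x ^ 2 ∂ν := by
  obtain ⟨_, ⟨ρ, hρ⟩, _, hmean⟩ := hν
  obtain ⟨hV, hV0, ε, hε, hf⟩ := h
  have hcont := hV.continuousAt
  have hρ' := ae_abs_le_of_measure_compl_Icc hρ
  have hlim : Tendsto (fun m => ∫ x, x ^ 2 * cskKernel V m x ∂ν) (𝓝 0) (𝓝 (∫ x, x ^ 2 ∂ν)) := by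
    refine tendsto_integral_filter_of_dominated_convergence (fun _ => ρ ^ 2 * 4)
      (.of_forall fun m => by unfold cskKernel; fun_prop) ?_ (integrable_const _)
      (.of_forall fun x => by simpa using (tendsto_cskKernel hcont hV0.ne' x).const_mul (x ^ 2))
    filter_upwards [eventually_abs_cskKernel_le hcont hV0 ρ] with m hm
    filter_upwards [hρ'] with x hx
    rw [Real.norm_eq_abs, abs_mul, abs_pow]
    gcongr
    exact hm x hx
  have hlim' : Tendsto (fun m => V m + m ^ 2) (𝓝 0) (𝓝 (V 0)) := by
    simpa using hcont.tendsto.add (continuousAt_id.pow 2).tendsto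
  refine tendsto_nhds_unique (hlim'.mono_left nhdsWithin_le_nhds : Tendsto _ (𝓝[≠] (0 : ℝ)) _)
    ((hlim.mono_left nhdsWithin_le_nhds).congr' ?_)
  filter_upwards [self_mem_nhdsWithin, nhdsWithin_le_nhds (Metric.ball_mem_nhds 0 hε),
    nhdsWithin_le_nhds (eventually_lt_cskKernel_denom hcont hV0 ρ)] with m hm hmε hden
  exact integral_sq_mul_cskKernel hm (by simpa using integrable_eval hρ Polynomial.X) hmean
    (hρ'.mono fun x hx => (hden x hx).ne') (hf m (by simpa using hmε)).2.2

end CSKIntegral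

section Characterization

open PowerSeries
open scoped Polynomial

variable {V : ℝ → ℝ} {v : ℝ⟦X⟧}

lemma isCSKGenerator_of_integral_eval {ν : Measure ℝ} [IsFiniteMeasure ν] {ρ : ℝ}
    (hν : ν (Set.Icc (-ρ) ρ)ᶜ = 0) (hmass : ∫ _, (1 : ℝ) ∂ν = 1) (hmean : ∫ x, x ∂ν = 0)
    (hvar : ∫ x, x ^ 2 ∂ν ≠ 0) : IsCSKGenerator ν := by
  refine ⟨⟨?_⟩, ⟨ρ, hν⟩, ?_, hmean⟩
  · simpa [measureReal_def, ENNReal.toReal_eq_one_iff] using hmass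
  · rintro a rfl
    simp only [integral_dirac] at hmean hvar
    exact hvar (by simp [hmean])

theorem memV_iff_posSemidefKernel (hV : HasMaclaurinSeries V v) :
    memV V ↔ constantCoeff v = 1 ∧ PosSemidefKernel (gramKernel v) := by
  constructor
  · rintro ⟨ν, hgen, hvar, hVν⟩
    have hv : constantCoeff v = 1 := by rw [← hV.apply_zero, hVν.apply_zero hgen, hvar]
    obtain ⟨_, ⟨ρ, hρ⟩, -⟩ := hgen
    obtain ⟨E, hE⟩ := exists_linearMap_integral_eval hρ
    refine ⟨hv, (posSemidefKernel_gramKernel_iff hv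
      ((isCSKVarianceFun_iff hV hv hρ hE).1 hVν)).2 fun q => ?_⟩
    rw [← hE]
    exact integral_nonneg fun x => by simpa using mul_self_nonneg (q.eval x)
  · rintro ⟨hv, hpsd⟩
    obtain ⟨R, hvR⟩ := hV.exists_abs_coeff_le (by simp [hv])
    obtain ⟨E, hE1⟩ := exists_mapCoeff_cskSeries_eq_one hv
    obtain ⟨ν, ρ, _, hρ, hE⟩ := exists_measure_of_hankel_nonneg
      ((posSemidefKernel_gramKernel_iff hv hE1).1 hpsd) (B := 1) (R := 6 * (R + 1))
      (by linarith [nonneg_of_abs_coeff_le hvR]) (by simpa using abs_map_X_pow_le hv hE1 hvR)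
    have hmass : ∫ _, (1 : ℝ) ∂ν = 1 := by
      simpa [map_one_of_mapCoeff_cskSeries hv hE1] using hE 1
    have hmean : ∫ x, x ∂ν = 0 := by
      simpa [map_X_of_mapCoeff_cskSeries hv hE1] using hE Polynomial.X
    have hvar : ∫ x, x ^ 2 ∂ν = 1 := by
      simpa only [Polynomial.eval_pow, Polynomial.eval_X] using
        (hE (Polynomial.X ^ 2)).trans (map_X_sq_of_mapCoeff_cskSeries hv hE1)
    exact ⟨ν, isCSKGenerator_of_integral_eval hρ hmass hmean (by simp [hvar]), hvar,
      (isCSKVarianceFun_iff hV hv hρ hE).2 hE1⟩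

theorem memVinf_iff_posSemidefKernel (hV : HasMaclaurinSeries V v) :
    memVinf V ↔ constantCoeff v = 1 ∧ PosSemidefKernel (slopeKernel v) := by
  have hconst (l : ℝ) : constantCoeff (rescale l v) = constantCoeff v := by
    rw [← coeff_zero_eq_constantCoeff_apply, ← coeff_zero_eq_constantCoeff_apply, coeff_rescale,
      pow_zero, one_mul]
  simp only [memVinf, memV_iff_posSemidefKernel (hV.comp_const_mul _), forall_and, hconst,
    forall_const, posSemidefKernel_gramKernel_rescale_iff]

lemma memVinf.exists_hasMaclaurinSeries (h : memVinf V) : ∃ v, HasMaclaurinSeries V v := by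
  obtain ⟨_, _, _, hV, -⟩ := h 1
  simpa using exists_hasMaclaurinSeries_of_analyticAt hV

end Characterization

/-- If `V₁ ∈ 𝒱∞` and `c ≥ 1` then `m ↦ c·V₁(m) − c + 1 ∈ 𝒱∞`. -/
theorem memVinf_scale_affine (V₁ : ℝ → ℝ) (c : ℝ) (hc : 1 ≤ c) (h₁ : memVinf V₁) :
    memVinf (fun m => c * V₁ m - c + 1) := by
  obtain ⟨v, hV⟩ := h₁.exists_hasMaclaurinSeries
  obtain ⟨hv, hpsd⟩ := (memVinf_iff_posSemidefKernel hV).1 h₁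
  refine (memVinf_iff_posSemidefKernel (hV.const_mul_sub_add_one c)).2
    ⟨?_, hpsd.slopeKernel_affine hc⟩
  simp [hv]
end
end

section
/- If the function V₁(m) belongs to the class 𝒱∞, then the function m ↦ V₁(m) − m² belongs to the class 𝒱. -/
open MeasureTheory Filter

noncomputable section

/-!
Write `M_ω(ζ) = ∫ (1 - ζ x)⁻¹ ∂ω`. A measure `ν` of mean zero generates a CSK family with variance
function `V` exactly when `M_ν(m / (V m + m²)) = (V m + m²) / V m` near `0`.

If `V(c ·) ∈ 𝒱` with `c² s = 1`, then rescaling `x² ∂ν` by `c⁻¹` gives a probability measure `ω_s`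
with `M_{ω_s}(m / (V m + s m²)) = (V m + s m²)² / V m`. This relation is analytic in `(s, m)` up to
`s = 0`, so the moments of `ω_s` obey a bound `C Lⁿ` uniform in small `s`, and a weak limit `ω` of
`ω_s` along a sequence `s → 0` satisfies `M_ω(m / V m) = V m`.

The probability measure `ν` with `(1 - ζ² M_ω(ζ)) M_ν(ζ) = 1` then generates a CSK family with
variance function `V m - m²`. It exists as the spectral measure, at the first basis vector, of
multiplication by `x` on `L²(ω)` bordered by one row and column.
-/

open scoped Topology NNReal ENNReal CompactlySupported

section MomentGeneratingFunction

/-- The ordinary moment generating function `ζ ↦ ∑ ζⁿ ∫ xⁿ ∂ν`, encoded by its closed form: for `ν`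
of bounded support both have the same germ at `0`, and only this germ is used. -/
def ordinaryMGF (ν : Measure ℝ) (ζ : ℝ) : ℝ := ∫ x, (1 - ζ * x)⁻¹ ∂ν

lemma ordinaryMGF_zero (ν : Measure ℝ) : ordinaryMGF ν 0 = ν.real Set.univ := by
  simp [ordinaryMGF]

lemma eventually_abs_mul_lt_one (R : ℝ) : ∀ᶠ ζ in 𝓝 (0 : ℝ), |ζ * R| < 1 :=
  (continuous_mul_const R).abs.continuousAt.eventually_lt continuousAt_const (by simp)

lemma abs_mul_le_abs_mul_of_abs_le {x R : ℝ} (hx : |x| ≤ R) (ζ : ℝ) : |ζ * x| ≤ |ζ * R| := by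
  rw [abs_mul, abs_mul]
  exact mul_le_mul_of_nonneg_left (hx.trans (le_abs_self R)) (abs_nonneg ζ)

lemma one_sub_mul_pos {ζ x R : ℝ} (hx : |x| ≤ R) (hζ : |ζ * R| < 1) : 0 < 1 - ζ * x :=
  sub_pos.2 (abs_lt.1 ((abs_mul_le_abs_mul_of_abs_le hx ζ).trans_lt hζ)).2

lemma continuousOn_inv_one_sub_mul {ζ R : ℝ} (hζ : |ζ * R| < 1) :
    ContinuousOn (fun x => (1 - ζ * x)⁻¹) (Set.Icc (-R) R) :=
  ContinuousOn.inv₀ (by fun_prop) fun _ hx => (one_sub_mul_pos (abs_le.2 hx) hζ).ne'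

variable {ν : Measure ℝ} [IsFiniteMeasure ν] {R : ℝ}

lemma integrable_of_continuousOn_Icc (hR : ∀ᵐ x ∂ν, |x| ≤ R) {f : ℝ → ℝ}
    (hf : ContinuousOn f (Set.Icc (-R) R)) : Integrable f ν := by
  have hmem : ∀ᵐ x ∂ν, x ∈ Set.Icc (-R) R := hR.mono fun _ => abs_le.1
  rw [← Measure.restrict_eq_self_of_ae_mem hmem]
  exact hf.integrableOn_Icc

lemma integrable_inv_one_sub_mul (hR : ∀ᵐ x ∂ν, |x| ≤ R) {ζ : ℝ} (hζ : |ζ * R| < 1) :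
    Integrable (fun x => (1 - ζ * x)⁻¹) ν :=
  integrable_of_continuousOn_Icc hR (continuousOn_inv_one_sub_mul hζ)

lemma hasSum_ordinaryMGF (hR : ∀ᵐ x ∂ν, |x| ≤ R) {ζ : ℝ} (hζ : |ζ * R| < 1) :
    HasSum (fun n : ℕ => ζ ^ n * ∫ x, x ^ n ∂ν) (ordinaryMGF ν ζ) := by
  have hbound (n : ℕ) : ∀ᵐ x ∂ν, ‖‖(ζ * x) ^ n‖‖ ≤ |ζ * R| ^ n := by
    filter_upwards [hR] with x hx
    rw [norm_norm, norm_pow]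
    exact pow_le_pow_left₀ (norm_nonneg _) (abs_mul_le_abs_mul_of_abs_le hx ζ) n
  have hsum : Summable fun n => ∫ x, ‖(ζ * x) ^ n‖ ∂ν :=
    .of_nonneg_of_le (fun n => integral_nonneg fun x => norm_nonneg _)
      (fun n => (le_abs_self _).trans (norm_integral_le_of_norm_le_const (hbound n)))
      ((summable_geometric_of_lt_one (abs_nonneg _) hζ).mul_right (ν.real Set.univ))
  have hgeom : ∫ x, ∑' n : ℕ, (ζ * x) ^ n ∂ν = ordinaryMGF ν ζ :=
    integral_congr_ae <| hR.mono fun x hx =>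
      tsum_geometric_of_abs_lt_one ((abs_mul_le_abs_mul_of_abs_le hx ζ).trans_lt hζ)
  have h := hasSum_integral_of_summable_integral_norm
    (fun n => integrable_of_continuousOn_Icc (f := fun x => (ζ * x) ^ n) hR (by fun_prop)) hsum
  rw [hgeom] at h
  simpa only [mul_pow, integral_const_mul] using h

lemma hasFPowerSeriesAt_of_eventually_hasSum {f : ℝ → ℝ} {a : ℕ → ℝ}
    (h : ∀ᶠ ζ in 𝓝 0, HasSum (fun n : ℕ => ζ ^ n * a n) (f ζ)) :
    HasFPowerSeriesAt f (FormalMultilinearSeries.ofScalars ℝ a) 0 := by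
  simpa [hasFPowerSeriesAt_iff] using h

lemma hasFPowerSeriesAt_ordinaryMGF (hR : ∀ᵐ x ∂ν, |x| ≤ R) :
    HasFPowerSeriesAt (ordinaryMGF ν)
      (FormalMultilinearSeries.ofScalars ℝ fun n => ∫ x, x ^ n ∂ν) 0 :=
  hasFPowerSeriesAt_of_eventually_hasSum <|
    (eventually_abs_mul_lt_one R).mono fun _ => hasSum_ordinaryMGF hR

lemma continuousAt_ordinaryMGF (hR : ∀ᵐ x ∂ν, |x| ≤ R) : ContinuousAt (ordinaryMGF ν) 0 :=
  (hasFPowerSeriesAt_ordinaryMGF hR).analyticAt.continuousAt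

lemma integral_pow_eq_of_eventually_hasSum (hR : ∀ᵐ x ∂ν, |x| ≤ R) {a : ℕ → ℝ}
    (h : ∀ᶠ ζ in 𝓝 0, HasSum (fun n : ℕ => ζ ^ n * a n) (ordinaryMGF ν ζ)) (n : ℕ) :
    ∫ x, x ^ n ∂ν = a n := by
  have := (hasFPowerSeriesAt_ordinaryMGF hR).eq_formalMultilinearSeries
    (hasFPowerSeriesAt_of_eventually_hasSum h)
  simpa using congrArg (fun p => p.coeff n) this

end MomentGeneratingFunction

section SquareBias

/-- The measure `x² ∂ν`, not normalized; its moments are those of `ν` shifted by two. -/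
def sqBiased (ν : Measure ℝ) : Measure ℝ := ν.withDensity fun x => ENNReal.ofReal (x ^ 2)

lemma integral_sqBiased (ν : Measure ℝ) (f : ℝ → ℝ) :
    ∫ x, f x ∂(sqBiased ν) = ∫ x, x ^ 2 * f x ∂ν := by
  rw [sqBiased, integral_withDensity_eq_integral_toReal_smul (by fun_prop) (by simp)]
  simp [ENNReal.toReal_ofReal, sq_nonneg]

lemma real_univ_sqBiased (ν : Measure ℝ) : (sqBiased ν).real Set.univ = ∫ x, x ^ 2 ∂ν := by
  simpa using integral_sqBiased ν fun _ => 1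

lemma ae_sqBiased_of_ae {ν : Measure ℝ} {p : ℝ → Prop} (h : ∀ᵐ x ∂ν, p x) :
    ∀ᵐ x ∂(sqBiased ν), p x :=
  (withDensity_absolutelyContinuous _ _).ae_le h

variable {ν : Measure ℝ} [IsFiniteMeasure ν] {R : ℝ}

lemma isFiniteMeasure_sqBiased (hR : ∀ᵐ x ∂ν, |x| ≤ R) : IsFiniteMeasure (sqBiased ν) :=
  isFiniteMeasure_withDensity_ofReal
    (integrable_of_continuousOn_Icc (f := fun x => x ^ 2) hR (by fun_prop)).2

lemma ordinaryMGF_eq_add_sqBiased (hR : ∀ᵐ x ∂ν, |x| ≤ R) {ζ : ℝ} (hζ : |ζ * R| < 1) :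
    ordinaryMGF ν ζ =
      ν.real Set.univ + ζ * ∫ x, x ∂ν + ζ ^ 2 * ordinaryMGF (sqBiased ν) ζ := by
  have hint {f : ℝ → ℝ} (hf : ContinuousOn f (Set.Icc (-R) R)) : Integrable f ν :=
    integrable_of_continuousOn_Icc hR hf
  have hinv := continuousOn_inv_one_sub_mul hζ
  have hexp : (fun x => (1 - ζ * x)⁻¹) =ᵐ[ν]
      fun x => 1 + ζ * x + ζ ^ 2 * (x ^ 2 * (1 - ζ * x)⁻¹) := by
    filter_upwards [hR] with x hx
    have := (one_sub_mul_pos hx hζ).ne'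
    field_simp
    ring
  rw [ordinaryMGF, integral_congr_ae hexp,
    integral_add (hint (by fun_prop)) (hint (by fun_prop)),
    integral_add (hint (by fun_prop)) (hint (by fun_prop)), integral_const_mul,
    integral_const_mul, ← integral_sqBiased, ordinaryMGF]
  simp

end SquareBias

section Kernel

variable {V : ℝ → ℝ} {ν : Measure ℝ} {R : ℝ}

lemma cskKernel_denom_eq {m : ℝ} (hD : V m + m ^ 2 ≠ 0) (x : ℝ) :
    V m + m * (m - x) = (V m + m ^ 2) * (1 - m / (V m + m ^ 2) * x) := by
  field_simp
  ring

lemma cskKernel_eq {m : ℝ} (hD : V m + m ^ 2 ≠ 0) (x : ℝ) :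
    cskKernel V m x = V m / (V m + m ^ 2) * (1 - m / (V m + m ^ 2) * x)⁻¹ := by
  rw [cskKernel, cskKernel_denom_eq hD, div_mul_eq_div_div, div_eq_mul_inv _ (1 - _)]

lemma eventually_add_mul_sq_pos (hV : ContinuousAt V 0) (hV0 : 0 < V 0) (s : ℝ) :
    ∀ᶠ m in 𝓝 0, 0 < V m + s * m ^ 2 :=
  (show ContinuousAt (fun m => V m + s * m ^ 2) 0 by fun_prop).eventually_const_lt
    (by simpa using hV0)

lemma tendsto_div_add_mul_sq (hV : ContinuousAt V 0) (hV0 : 0 < V 0) (s : ℝ) :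
    Tendsto (fun m => m / (V m + s * m ^ 2)) (𝓝 0) (𝓝 0) := by
  simpa using (show ContinuousAt (fun m => m / (V m + s * m ^ 2)) 0 from
    continuousAt_id.div (by fun_prop) (by simpa using hV0.ne')).tendsto

lemma IsCSKGenerator.ae_abs_le (h : IsCSKGenerator ν) : ∃ R, ∀ᵐ x ∂ν, |x| ≤ R := by
  obtain ⟨-, ⟨R, hR⟩, -⟩ := h
  exact ⟨R, (ae_iff.2 hR : ∀ᵐ x ∂ν, x ∈ Set.Icc (-R) R).mono fun _ => abs_le.2⟩

lemma isCSKGenerator_of_integral_sq_pos [IsProbabilityMeasure ν] (hR : ∀ᵐ x ∂ν, |x| ≤ R)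
    (hmean : ∫ x, x ∂ν = 0) (hvar : 0 < ∫ x, x ^ 2 ∂ν) : IsCSKGenerator ν := by
  refine ⟨inferInstance, ⟨R, ae_iff.1 (hR.mono fun _ => abs_le.1)⟩, ?_, hmean⟩
  rintro a rfl
  rw [integral_dirac] at hmean hvar
  simp [hmean] at hvar

/-- The first-moment condition is implied by the total-mass condition, because
`(V m + m² - m x) f(x, m) = V m`. -/
lemma cskKernel_conditions_iff [IsProbabilityMeasure ν] (hR : ∀ᵐ x ∂ν, |x| ≤ R)
    (hmean : ∫ x, x ∂ν = 0) {m : ℝ} (hVm : 0 < V m) (hq : |m / (V m + m ^ 2) * R| < 1) :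
    ((∀ᵐ x ∂ν, 0 ≤ cskKernel V m x) ∧ ∫ x, cskKernel V m x ∂ν = 1 ∧
        ∫ x, x * cskKernel V m x ∂ν = m) ↔
      ordinaryMGF ν (m / (V m + m ^ 2)) = (V m + m ^ 2) / V m := by
  have hD : 0 < V m + m ^ 2 := by positivity
  have hint : ∫ x, cskKernel V m x ∂ν =
      V m / (V m + m ^ 2) * ordinaryMGF ν (m / (V m + m ^ 2)) := by
    simp_rw [cskKernel_eq hD.ne', integral_const_mul, ordinaryMGF]
  have hmass : ∫ x, cskKernel V m x ∂ν = 1 ↔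
      ordinaryMGF ν (m / (V m + m ^ 2)) = (V m + m ^ 2) / V m := by
    rw [hint, div_mul_eq_mul_div, div_eq_one_iff_eq hD.ne', eq_div_iff hVm.ne', mul_comm]
  have hpos : ∀ᵐ x ∂ν, 0 ≤ cskKernel V m x := by
    filter_upwards [hR] with x hx
    have := one_sub_mul_pos hx hq
    rw [cskKernel_eq hD.ne']
    positivity
  have hfst (h1 : ∫ x, cskKernel V m x ∂ν = 1) : ∫ x, x * cskKernel V m x ∂ν = m := by
    rcases eq_or_ne m 0 with rfl | hm
    · simpa [cskKernel_eq hD.ne', hVm.ne'] using hmean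
    have hker : Integrable (cskKernel V m) ν :=
      .congr ((integrable_inv_one_sub_mul hR hq).const_mul _)
        (.of_forall fun x => (cskKernel_eq hD.ne' x).symm)
    have hlin : (fun x => x * cskKernel V m x) =ᵐ[ν]
        fun x => (V m + m ^ 2) / m * cskKernel V m x - V m / m := by
      filter_upwards [hR] with x hx
      have : V m + m * (m - x) ≠ 0 := by
        rw [cskKernel_denom_eq hD.ne']
        exact mul_ne_zero hD.ne' (one_sub_mul_pos hx hq).ne'
      rw [cskKernel]
      field_simp
      ring
    rw [integral_congr_ae hlin, integral_sub (hker.const_mul _) (integrable_const _),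
      integral_const_mul, h1, integral_const, probReal_univ, one_smul]
    field_simp
    ring
  exact ⟨fun h => hmass.1 h.2.1, fun h => ⟨hpos, hmass.2 h, hfst (hmass.2 h)⟩⟩

lemma isCSKVarianceFun_iff_s6 [IsProbabilityMeasure ν] (hR : ∀ᵐ x ∂ν, |x| ≤ R)
    (hmean : ∫ x, x ∂ν = 0) (hV : AnalyticAt ℝ V 0) (hV0 : 0 < V 0) :
    IsCSKVarianceFun ν V ↔
      ∀ᶠ m in 𝓝 0, ordinaryMGF ν (m / (V m + m ^ 2)) = (V m + m ^ 2) / V m := by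
  have hq : ∀ᶠ m in 𝓝 0, |m / (V m + m ^ 2) * R| < 1 := by
    simpa using (tendsto_div_add_mul_sq hV.continuousAt hV0 1).eventually
      (eventually_abs_mul_lt_one R)
  have hcond := (hV.continuousAt.eventually_const_lt hV0).and hq |>.mono fun m hm =>
    cskKernel_conditions_iff hR hmean hm.1 hm.2
  rw [← eventually_congr hcond, Metric.eventually_nhds_iff]
  simp [IsCSKVarianceFun, hV, hV0]

lemma eventually_ordinaryMGF_sqBiased_eq [IsProbabilityMeasure ν] (hR : ∀ᵐ x ∂ν, |x| ≤ R)
    (hmean : ∫ x, x ∂ν = 0) (hV : IsCSKVarianceFun ν V) :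
    ∀ᶠ m in 𝓝[≠] 0,
      ordinaryMGF (sqBiased ν) (m / (V m + m ^ 2)) = (V m + m ^ 2) ^ 2 / V m := by
  obtain ⟨hVan, hV0, -⟩ := id hV
  have hq : ∀ᶠ m in 𝓝 0, |m / (V m + m ^ 2) * R| < 1 := by
    simpa using (tendsto_div_add_mul_sq hVan.continuousAt hV0 1).eventually
      (eventually_abs_mul_lt_one R)
  filter_upwards [nhdsWithin_le_nhds ((isCSKVarianceFun_iff_s6 hR hmean hVan hV0).1 hV),
    nhdsWithin_le_nhds hq, nhdsWithin_le_nhds (hVan.continuousAt.eventually_const_lt hV0),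
    self_mem_nhdsWithin] with m hM hqm hVm (hm : m ≠ 0)
  rw [ordinaryMGF_eq_add_sqBiased hR hqm, hmean, probReal_univ] at hM
  have hD : V m + m ^ 2 ≠ 0 := by positivity
  field_simp at hM ⊢
  exact mul_left_cancel₀ (pow_ne_zero 2 hm) (by linear_combination hM)

lemma IsCSKVarianceFun.apply_zero_s6 [IsProbabilityMeasure ν] (hR : ∀ᵐ x ∂ν, |x| ≤ R)
    (hmean : ∫ x, x ∂ν = 0) (hV : IsCSKVarianceFun ν V) : V 0 = ∫ x, x ^ 2 ∂ν := by
  obtain ⟨hVan, hV0, -⟩ := id hV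
  have hVc := hVan.continuousAt
  have := isFiniteMeasure_sqBiased hR
  have hq : Tendsto (fun m => m / (V m + m ^ 2)) (𝓝 0) (𝓝 0) := by
    simpa using tendsto_div_add_mul_sq hVc hV0 1
  have hlhs := (continuousAt_ordinaryMGF (ae_sqBiased_of_ae hR)).tendsto.comp hq
  have hrhs : Tendsto (fun m => (V m + m ^ 2) ^ 2 / V m) (𝓝 0) (𝓝 ((V 0 + 0 ^ 2) ^ 2 / V 0)) :=
    (show ContinuousAt (fun m => (V m + m ^ 2) ^ 2 / V m) 0 from
      ContinuousAt.div (by fun_prop) hVc hV0.ne').tendsto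
  have h := tendsto_nhds_unique
    ((hlhs.mono_left nhdsWithin_le_nhds).congr' (eventually_ordinaryMGF_sqBiased_eq hR hmean hV))
    (hrhs.mono_left nhdsWithin_le_nhds)
  rw [← real_univ_sqBiased, ← ordinaryMGF_zero, h]
  field_simp
  simp

end Kernel

section LevyLaw

/-- The law `ω` represents `V` at scale `s`. For `s = 1` it is the law `x² ∂ν` obtained from a
measure `ν` of variance one generating a CSK family with variance function `V`. For `s = 0` the
relation `M(m / V m) = V m` says that `ω` is the measure in the free Lévy–Khintchine representation
`R(z) = ∫ z / (1 - z x) ∂ω` of the R-transform `m / V m ↦ m`. -/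
structure IsScaledLevyLaw (V : ℝ → ℝ) (s : ℝ) (ω : Measure ℝ) : Prop where
  isProbabilityMeasure : IsProbabilityMeasure ω
  ae_abs_le : ∃ R, ∀ᵐ x ∂ω, |x| ≤ R
  ordinaryMGF_eq : ∀ᶠ m in 𝓝 0,
    ordinaryMGF ω (m / (V m + s * m ^ 2)) = (V m + s * m ^ 2) ^ 2 / V m

lemma ordinaryMGF_map_mul (b : ℝ) (σ : Measure ℝ) (ζ : ℝ) :
    ordinaryMGF (σ.map (b * ·)) ζ = ordinaryMGF σ (ζ * b) := by
  rw [ordinaryMGF, integral_map (by fun_prop) (by fun_prop)]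
  simp only [ordinaryMGF, mul_assoc]

lemma IsScaledLevyLaw.map_inv_mul {V : ℝ → ℝ} {c s : ℝ} {σ : Measure ℝ} (hc : c ≠ 0)
    (h : IsScaledLevyLaw (fun m => V (c * m)) (c ^ 2 * s) σ) :
    IsScaledLevyLaw V s (σ.map (c⁻¹ * ·)) where
  isProbabilityMeasure :=
    have := h.isProbabilityMeasure
    Measure.isProbabilityMeasure_map (by fun_prop)
  ae_abs_le := by
    obtain ⟨R, hR⟩ := h.ae_abs_le
    refine ⟨|c⁻¹ * R|, ?_⟩
    rw [ae_map_iff (by fun_prop) (measurableSet_le (by fun_prop) (by fun_prop))]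
    exact hR.mono fun x hx => abs_mul_le_abs_mul_of_abs_le hx c⁻¹
  ordinaryMGF_eq := by
    have hlim : Tendsto (fun m : ℝ => c⁻¹ * m) (𝓝 0) (𝓝 0) := by
      simpa using (continuous_const_mul c⁻¹).tendsto 0
    filter_upwards [hlim.eventually h.ordinaryMGF_eq] with m hm
    have hD : V (c * (c⁻¹ * m)) + c ^ 2 * s * (c⁻¹ * m) ^ 2 = V m + s * m ^ 2 := by
      rw [mul_inv_cancel_left₀ hc]
      field_simp
    rw [hD, mul_inv_cancel_left₀ hc] at hm
    rw [ordinaryMGF_map_mul, ← hm, div_mul_eq_mul_div, mul_comm]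

lemma memV.apply_zero_s6 {V : ℝ → ℝ} (h : memV V) : V 0 = 1 := by
  obtain ⟨ν, hν, hvar, hV⟩ := h
  have := hν.1
  obtain ⟨R, hR⟩ := hν.ae_abs_le
  rw [hV.apply_zero_s6 hR hν.2.2.2, hvar]

lemma memV.analyticAt {V : ℝ → ℝ} (h : memV V) : AnalyticAt ℝ V 0 := by
  obtain ⟨-, -, -, hV, -⟩ := h
  exact hV

lemma memV.exists_isScaledLevyLaw_one {V : ℝ → ℝ} (h : memV V) :
    ∃ ω, IsScaledLevyLaw V 1 ω := by
  have hV0 := h.apply_zero_s6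
  obtain ⟨ν, hν, hvar, hV⟩ := h
  have := hν.1
  obtain ⟨R, hR⟩ := hν.ae_abs_le
  have := isFiniteMeasure_sqBiased hR
  have hmass : (sqBiased ν).real Set.univ = 1 := by
    rw [real_univ_sqBiased, hvar]
  refine ⟨sqBiased ν, ⟨(ENNReal.toReal_eq_one_iff _).1 hmass⟩, ⟨R, ae_sqBiased_of_ae hR⟩, ?_⟩
  have hne := eventually_nhdsWithin_iff.1 (eventually_ordinaryMGF_sqBiased_eq hR hν.2.2.2 hV)
  filter_upwards [hne] with m hm
  rcases eq_or_ne m 0 with rfl | hm0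
  · simp [hV0, ordinaryMGF_zero, hmass]
  · simpa using hm hm0

lemma memV.exists_isScaledLevyLaw_of_comp_mul {V : ℝ → ℝ} {c s : ℝ} (hcs : c ^ 2 * s = 1)
    (h : memV fun m => V (c * m)) : ∃ ω, IsScaledLevyLaw V s ω := by
  have hc : c ≠ 0 := by
    rintro rfl
    simp at hcs
  obtain ⟨σ, hσ⟩ := h.exists_isScaledLevyLaw_one
  exact ⟨_, IsScaledLevyLaw.map_inv_mul hc (hcs ▸ hσ)⟩

end LevyLaw

section SpectralMeasure

variable {H : Type*} [NormedAddCommGroup H] [InnerProductSpace ℂ H] [CompleteSpace H]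
  {T : H →L[ℂ] H}

lemma abs_le_norm_of_mem_spectrum {x : ℝ} (hx : x ∈ spectrum ℝ T) : |x| ≤ ‖T‖ := by
  rcases subsingleton_or_nontrivial H
  · simp at hx
  · exact spectrum.norm_le_norm_of_mem hx

/-- The positive functional `f ↦ ⟪e, f(T) e⟫` whose Riesz–Markov measure is the spectral measure of
the self-adjoint operator `T` at the vector `e`. -/
def spectralFunctional (hT : IsSelfAdjoint T) (e : H) : C_c(spectrum ℝ T, ℝ) →ₚ[ℝ] ℝ :=
  .mk₀
    { toFun := fun f => (inner ℂ e (cfcHom hT f.toContinuousMap e)).re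
      map_add' := fun f g => by
        change (inner ℂ e (cfcHom hT (f.toContinuousMap + g.toContinuousMap) e)).re = _
        simp
      map_smul' := fun c f => by
        change (inner ℂ e (cfcHom hT (c • f.toContinuousMap) e)).re = _
        simp [inner_smul_right_eq_smul] }
    fun _ hf => ((ContinuousLinearMap.nonneg_iff_isPositive _).1
      ((cfcHom_nonneg_iff hT).2 hf)).re_inner_nonneg_right e

lemma exists_spectralMeasure (hT : IsSelfAdjoint T) (e : H) :
    ∃ ν : Measure ℝ, IsFiniteMeasure ν ∧ (∀ᵐ x ∂ν, |x| ≤ ‖T‖) ∧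
      ∀ f : ℝ → ℝ, ContinuousOn f (Set.Icc (-‖T‖) ‖T‖) →
        ∫ x, f x ∂ν = (inner ℂ e (cfc f T e)).re := by
  have : CompactSpace (spectrum ℝ T) := isCompact_iff_compactSpace.1 (spectrum.isCompact T)
  have hmeas : MeasurableSet (spectrum ℝ T) := (spectrum.isClosed T).measurableSet
  let μ := RealRMK.rieszMeasure (spectralFunctional hT e)
  refine ⟨μ.map Subtype.val, inferInstance, ?_, fun f hf => ?_⟩
  · rw [ae_map_iff (by fun_prop) (measurableSet_le (by fun_prop) (by fun_prop))]
    exact .of_forall fun x => abs_le_norm_of_mem_spectrum x.2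
  · have hf' : ContinuousOn f (spectrum ℝ T) :=
      hf.mono fun x hx => abs_le.1 (abs_le_norm_of_mem_spectrum hx)
    rw [(MeasurableEmbedding.subtype_coe hmeas).integral_map, cfc_apply f T hT hf']
    exact RealRMK.integral_rieszMeasure (spectralFunctional hT e)
      (CompactlySupportedContinuousMap.continuousMapEquiv ⟨_, hf'.domRestrict⟩)

lemma cfc_inv_one_sub_mul_apply (hT : IsSelfAdjoint T) {ζ : ℝ} (hζ : |ζ * ‖T‖| < 1) (w : H) :
    cfc (fun x => (1 - ζ * x)⁻¹) T (w - (ζ : ℂ) • T w) = w := by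
  have hne (x) (hx : x ∈ spectrum ℝ T) : 1 - ζ * x ≠ 0 :=
    (one_sub_mul_pos (abs_le_norm_of_mem_spectrum hx) hζ).ne'
  have hlin : cfc (fun x : ℝ => 1 - ζ * x) T = 1 - ζ • T := by
    rw [cfc_sub (fun _ => (1 : ℝ)) (fun x => ζ * x) T, cfc_const_one ℝ T,
      cfc_const_mul ζ (fun x => x) T, cfc_id' ℝ T]
  have hinv : cfc (fun x => (1 - ζ * x)⁻¹) T * (1 - ζ • T) = 1 := by
    have hcont : ContinuousOn (fun x => (1 - ζ * x)⁻¹) (spectrum ℝ T) :=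
      ContinuousOn.inv₀ (by fun_prop) hne
    rw [← hlin, ← cfc_mul _ _ T hcont (by fun_prop), ← cfc_const_one ℝ T]
    exact cfc_congr fun x hx => inv_mul_cancel₀ (hne x hx)
  simpa using congrArg (fun S : H →L[ℂ] H => S w) hinv

end SpectralMeasure

section BorderedOperator

variable {K : Type*} [NormedAddCommGroup K] [InnerProductSpace ℂ K]

/-- The operator `[[0, ⟪u, ·⟫], [u, A]]` on the Hilbert sum `ℂ ⊕ K`. -/
def borderedOperator (A : K →L[ℂ] K) (u : K) : WithLp 2 (ℂ × K) →L[ℂ] WithLp 2 (ℂ × K) :=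
  let E := WithLp.prodContinuousLinearEquiv 2 ℂ ℂ K
  (E.symm : (ℂ × K) →L[ℂ] WithLp 2 (ℂ × K)) ∘L
    ((innerSL ℂ u ∘L ContinuousLinearMap.snd ℂ ℂ K).prod
      (ContinuousLinearMap.toSpanSingleton ℂ u ∘L ContinuousLinearMap.fst ℂ ℂ K +
        A ∘L ContinuousLinearMap.snd ℂ ℂ K)) ∘L (E : WithLp 2 (ℂ × K) →L[ℂ] (ℂ × K))

lemma borderedOperator_toLp (A : K →L[ℂ] K) (u : K) (a : ℂ) (v : K) :
    borderedOperator A u (WithLp.toLp 2 (a, v)) = WithLp.toLp 2 (inner ℂ u v, a • u + A v) :=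
  rfl

lemma isSelfAdjoint_borderedOperator [CompleteSpace K] {A : K →L[ℂ] K} (hA : IsSelfAdjoint A)
    (u : K) : IsSelfAdjoint (borderedOperator A u) := by
  rw [ContinuousLinearMap.isSelfAdjoint_iff_isSymmetric] at hA ⊢
  rintro ⟨a, v⟩ ⟨b, w⟩
  have hAvw : inner ℂ (A v) w = inner ℂ v (A w) := hA v w
  simp only [ContinuousLinearMap.coe_coe, borderedOperator_toLp, WithLp.prod_inner_apply,
    inner_add_left, inner_add_right, inner_smul_left, inner_smul_right, RCLike.inner_apply,
    inner_conj_symm, hAvw]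
  ring

/-- The Schur complement of the corner entry of `1 - ζ • borderedOperator A u`. -/
lemma sub_smul_borderedOperator_toLp {A : K →L[ℂ] K} {u v : K} {ζ : ℂ} (hv : v - ζ • A v = u) :
    WithLp.toLp 2 (1, ζ • v) - ζ • borderedOperator A u (WithLp.toLp 2 (1, ζ • v)) =
      (1 - ζ ^ 2 * inner ℂ u v) • WithLp.toLp 2 ((1 : ℂ), (0 : K)) := by
  rw [borderedOperator_toLp, ← WithLp.toLp_smul, ← WithLp.toLp_smul, ← WithLp.toLp_sub]
  congr 1
  ext
  · simp only [Prod.fst_sub, Prod.smul_fst, inner_smul_right, smul_eq_mul]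
    ring
  · simp [← hv]

lemma exists_measure_of_borderedOperator [CompleteSpace K] {A : K →L[ℂ] K} (hA : IsSelfAdjoint A)
    {u : K} (hu : ‖u‖ = 1) :
    ∃ ν : Measure ℝ, IsProbabilityMeasure ν ∧ ∫ x, x ∂ν = 0 ∧ ∫ x, x ^ 2 ∂ν = 1 ∧
      ∃ R, (∀ᵐ x ∂ν, |x| ≤ R) ∧ ∀ (ζ g : ℝ) (v : K), |ζ * R| < 1 → v - (ζ : ℂ) • A v = u →
        inner ℂ u v = (g : ℂ) → (1 - ζ ^ 2 * g) * ordinaryMGF ν ζ = 1 := by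
  set T := borderedOperator A u
  have hT : IsSelfAdjoint T := isSelfAdjoint_borderedOperator hA u
  let e : WithLp 2 (ℂ × K) := WithLp.toLp 2 (1, 0)
  have hin (a : ℂ) (v : K) : inner ℂ e (WithLp.toLp 2 (a, v)) = a := by
    simp [e, WithLp.prod_inner_apply]
  have hTe : T e = WithLp.toLp 2 (0, u) := by
    simp [e, T, borderedOperator_toLp]
  have hTTe : T (T e) = WithLp.toLp 2 (1, A u) := by
    simp [hTe, T, borderedOperator_toLp, hu]
  obtain ⟨ν, _, hR, hint⟩ := exists_spectralMeasure hT e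
  have hmass : ν.real Set.univ = 1 := by
    simpa [cfc_const_one ℝ T, e, hin] using hint (fun _ => 1) (by fun_prop)
  refine ⟨ν, ⟨(ENNReal.toReal_eq_one_iff _).1 hmass⟩, ?_, ?_, ‖T‖, hR, fun ζ g v hζ hv hg => ?_⟩
  · rw [hint (fun x => x) (by fun_prop), cfc_id' ℝ T, hTe, hin, Complex.zero_re]
  · rw [hint (fun x => x ^ 2) (by fun_prop), cfc_pow (fun x => x) 2 T, cfc_id' ℝ T, pow_two]
    change (inner ℂ e (T (T e))).re = 1
    rw [hTTe, hin, Complex.one_re]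
  · have hres := cfc_inv_one_sub_mul_apply hT hζ (WithLp.toLp 2 (1, (ζ : ℂ) • v))
    rw [sub_smul_borderedOperator_toLp hv, hg, map_smul] at hres
    rw [ordinaryMGF, hint _ (continuousOn_inv_one_sub_mul hζ)]
    calc (1 - ζ ^ 2 * g) * (inner ℂ e (cfc (fun x => (1 - ζ * x)⁻¹) T e)).re
        = (inner ℂ e ((1 - (ζ : ℂ) ^ 2 * g) • cfc (fun x => (1 - ζ * x)⁻¹) T e)).re := by
          rw [inner_smul_right, ← Complex.re_ofReal_mul]
          push_cast
          rfl
      _ = 1 := by rw [hres, hin, Complex.one_re]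

end BorderedOperator

section BooleanTransform

/-- Multiplication by a bounded function `φ` as an operator on `L²`. -/
def mulOperator {α : Type*} [MeasurableSpace α] {μ : Measure α} (φ : Lp ℂ ⊤ μ) :
    Lp ℂ 2 μ →L[ℂ] Lp ℂ 2 μ :=
  (ContinuousLinearMap.mul ℂ ℂ).holderL μ ⊤ 2 2 φ

lemma coeFn_mulOperator {α : Type*} [MeasurableSpace α] {μ : Measure α} (φ : Lp ℂ ⊤ μ)
    (f : Lp ℂ 2 μ) : mulOperator φ f =ᵐ[μ] fun x => φ x * f x :=
  (ContinuousLinearMap.mul ℂ ℂ).coeFn_holder φ f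

lemma isSelfAdjoint_mulOperator {α : Type*} [MeasurableSpace α] {μ : Measure α} {φ : Lp ℂ ⊤ μ}
    (hφ : ∀ᵐ x ∂μ, star (φ x) = φ x) : IsSelfAdjoint (mulOperator φ) := by
  rw [ContinuousLinearMap.isSelfAdjoint_iff_isSymmetric]
  intro f g
  rw [ContinuousLinearMap.coe_coe, L2.inner_def, L2.inner_def]
  refine integral_congr_ae ?_
  filter_upwards [hφ, coeFn_mulOperator φ f, coeFn_mulOperator φ g] with x hx hf hg
  rw [hf, hg, RCLike.inner_apply, RCLike.inner_apply, map_mul, starRingEnd_apply (φ x), hx]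
  ring

lemma memLp_ofReal_of_continuousOn_Icc {ω : Measure ℝ} [IsFiniteMeasure ω] {L : ℝ}
    (hL : ∀ᵐ x ∂ω, |x| ≤ L) (p : ℝ≥0∞) {f : ℝ → ℝ} (hf : ContinuousOn f (Set.Icc (-L) L)) :
    MemLp (fun x => (f x : ℂ)) p ω := by
  obtain ⟨C, hC⟩ := isCompact_Icc.exists_bound_of_continuousOn hf
  refine .of_bound (Complex.continuous_ofReal.comp_aestronglyMeasurable
    (integrable_of_continuousOn_Icc hL hf).aestronglyMeasurable) C ?_
  filter_upwards [hL] with x hx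
  simpa using hC x (abs_le.1 hx)

/-- The measure `ν` is that of the Jacobi matrix obtained from the one of `ω` by adding a first row
and column with entries `0, 1`. -/
lemma exists_measure_one_sub_sq_mul_ordinaryMGF {ω : Measure ℝ} [IsProbabilityMeasure ω] {L : ℝ}
    (hL : ∀ᵐ x ∂ω, |x| ≤ L) :
    ∃ ν : Measure ℝ, IsProbabilityMeasure ν ∧ ∫ x, x ∂ν = 0 ∧ ∫ x, x ^ 2 ∂ν = 1 ∧
      ∃ R, (∀ᵐ x ∂ν, |x| ≤ R) ∧ ∀ ζ : ℝ, |ζ * R| < 1 → |ζ * L| < 1 →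
        (1 - ζ ^ 2 * ordinaryMGF ω ζ) * ordinaryMGF ν ζ = 1 := by
  have hid := memLp_ofReal_of_continuousOn_Icc hL ⊤ (f := id) (by fun_prop)
  have hone : MemLp (fun _ : ℝ => (1 : ℂ)) 2 ω := memLp_const 1
  have hsa : IsSelfAdjoint (mulOperator hid.toLp) :=
    isSelfAdjoint_mulOperator <| hid.coeFn_toLp.mono fun x hx => by rw [hx]; simp
  have hnorm : ‖hone.toLp‖ = 1 := by
    rw [Lp.norm_toLp, eLpNorm_const _ (by norm_num) (IsProbabilityMeasure.ne_zero ω)]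
    simp
  obtain ⟨ν, hν, hmean, hvar, R, hR, hν_eq⟩ := exists_measure_of_borderedOperator hsa hnorm
  refine ⟨ν, hν, hmean, hvar, R, hR, fun ζ hζR hζL => ?_⟩
  have hres := memLp_ofReal_of_continuousOn_Icc hL 2 (continuousOn_inv_one_sub_mul hζL)
  refine hν_eq ζ _ hres.toLp hζR (Lp.ext ?_) ?_
  · filter_upwards [Lp.coeFn_sub hres.toLp ((ζ : ℂ) • mulOperator hid.toLp hres.toLp),
      Lp.coeFn_smul (ζ : ℂ) (mulOperator hid.toLp hres.toLp), coeFn_mulOperator hid.toLp hres.toLp,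
      hid.coeFn_toLp, hres.coeFn_toLp, hone.coeFn_toLp, hL] with x hsub hsmul hmul hid hres hone hx
    have hne : (1 - ζ * x : ℂ) ≠ 0 := by exact_mod_cast (one_sub_mul_pos hx hζL).ne'
    rw [hsub, Pi.sub_apply, hsmul, Pi.smul_apply, hmul, hid, hres, hone, smul_eq_mul]
    push_cast
    field_simp
    simp
  · rw [ordinaryMGF, L2.inner_def, ← integral_complex_ofReal]
    refine integral_congr_ae ?_
    filter_upwards [hres.coeFn_toLp, hone.coeFn_toLp] with x hres hone
    rw [hres, hone]
    simp

end BooleanTransform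

section BooleanVariance

lemma memV_sub_sq_of_isScaledLevyLaw_zero {V : ℝ → ℝ} {ω : Measure ℝ} (hV : AnalyticAt ℝ V 0)
    (hV0 : 0 < V 0) (h : IsScaledLevyLaw V 0 ω) : memV fun m => V m - m ^ 2 := by
  obtain ⟨hω, ⟨L, hL⟩, hM⟩ := h
  obtain ⟨ν, hν, hmean, hvar, R, hR, hνω⟩ := exists_measure_one_sub_sq_mul_ordinaryMGF hL
  have hW : AnalyticAt ℝ (fun m => V m - m ^ 2) 0 := by fun_prop
  have hW0 : 0 < V 0 - 0 ^ 2 := by simpa using hV0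
  refine ⟨ν, isCSKGenerator_of_integral_sq_pos hR hmean (by simp [hvar]), hvar,
    (isCSKVarianceFun_iff_s6 hR hmean hW hW0).2 ?_⟩
  have hq := tendsto_div_add_mul_sq hV.continuousAt hV0 0
  filter_upwards [hM, hq.eventually (eventually_abs_mul_lt_one R),
    hq.eventually (eventually_abs_mul_lt_one L), hV.continuousAt.eventually_const_lt hV0,
    hW.continuousAt.eventually_const_lt hW0] with m hMm hmR hmL hVm hWm
  simp only [zero_mul, add_zero] at hMm hmR hmL
  have h1 := hνω _ hmR hmL
  rw [hMm] at h1
  rw [sub_add_cancel, eq_div_iff hWm.ne']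
  field_simp at h1
  linear_combination h1

end BooleanVariance

section UniformSupport

lemma exists_analyticAt_comp_eventuallyEq {𝕜 E F G : Type*} [RCLike 𝕜] [NormedAddCommGroup E]
    [NormedSpace 𝕜 E] [CompleteSpace E] [NormedAddCommGroup F] [NormedSpace 𝕜 F]
    [CompleteSpace F] [NormedAddCommGroup G] [NormedSpace 𝕜 G] {g : E → F} {g' : E ≃L[𝕜] F}
    {f : E → G} {a : E} (hg : AnalyticAt 𝕜 g a) (hg' : HasFDerivAt g (g' : E →L[𝕜] F) a)
    (hf : AnalyticAt 𝕜 f a) :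
    ∃ k : F → G, AnalyticAt 𝕜 k (g a) ∧ k ∘ g =ᶠ[𝓝 a] f := by
  have hgω : ContDiffAt 𝕜 ⊤ g a := hg.contDiffAt
  have hinv : AnalyticAt 𝕜 (hgω.localInverse hg' (by simp)) (g a) :=
    (hgω.to_localInverse hg' (by simp)).analyticAt
  refine ⟨f ∘ hgω.localInverse hg' (by simp), hf.comp_of_eq hinv ?_, ?_⟩
  · exact hgω.localInverse_apply_image hg' (by simp)
  · exact (hgω.hasStrictFDerivAt' hg' (by simp)).eventually_left_inverse.mono fun x hx =>
      congrArg f hx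

lemma exists_nnnorm_changeOrigin_mul_pow_le {𝕜 E F : Type*} [NontriviallyNormedField 𝕜]
    [NormedAddCommGroup E] [NormedSpace 𝕜 E] [NormedAddCommGroup F] [NormedSpace 𝕜 F]
    (p : FormalMultilinearSeries 𝕜 E F) {r : ℝ≥0} (hr : (r + r : ℝ≥0∞) < p.radius) :
    ∃ C : ℝ≥0, ∀ y : E, ‖y‖₊ ≤ r → ∀ n, ‖p.changeOrigin y n‖₊ * r ^ n ≤ C := by
  have hr' : (r : ℝ≥0∞) < p.radius := le_self_add.trans_lt hr
  have hsum := (NNReal.summable_sigma.1 (p.changeOriginSeries_summable_aux₁ hr)).2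
  refine ⟨_, fun y hy n => le_trans ?_ (hsum.le_tsum n fun _ _ => zero_le)⟩
  have hy' : (‖y‖₊ : ℝ≥0∞) < p.radius := (ENNReal.coe_le_coe.2 hy).trans_lt hr'
  simp only [NNReal.tsum_mul_right]
  gcongr
  refine (p.nnnorm_changeOrigin_le n hy').trans ?_
  exact (p.changeOriginSeries_summable_aux₂ hy' n).tsum_le_tsum (fun s => by gcongr)
    (p.changeOriginSeries_summable_aux₂ hr' n)

lemma exists_eventually_hasFPowerSeriesOnBall {𝕜 E F : Type*} [NontriviallyNormedField 𝕜]
    [NormedAddCommGroup E] [NormedSpace 𝕜 E] [NormedAddCommGroup F] [NormedSpace 𝕜 F]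
    [CompleteSpace F] {f : E → F} {x : E} (hf : AnalyticAt 𝕜 f x) :
    ∃ r : ℝ≥0, 0 < r ∧ ∃ C : ℝ≥0, ∀ᶠ y in 𝓝 x, ∃ p : FormalMultilinearSeries 𝕜 E F,
      HasFPowerSeriesOnBall f p y r ∧ ∀ n, ‖p n‖₊ * r ^ n ≤ C := by
  obtain ⟨p, ρ, hp⟩ := hf
  obtain ⟨r, hr, hrρ⟩ : ∃ r : ℝ≥0, 0 < r ∧ (r + r : ℝ≥0∞) < ρ := by
    obtain ⟨t, ht, htρ⟩ := ENNReal.lt_iff_exists_nnreal_btwn.1 hp.r_pos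
    exact ⟨t / 2, half_pos (by exact_mod_cast ht), by rwa [← ENNReal.coe_add, add_halves]⟩
  obtain ⟨C, hC⟩ := exists_nnnorm_changeOrigin_mul_pow_le p (hrρ.trans_le hp.r_le)
  refine ⟨r, hr, C, ?_⟩
  filter_upwards [Metric.closedBall_mem_nhds x hr] with y hy
  have hyr : ‖y - x‖₊ ≤ r := by
    rw [mem_closedBall_iff_norm] at hy
    exact_mod_cast hy
  have hyr' : (‖y - x‖₊ : ℝ≥0∞) ≤ r := ENNReal.coe_le_coe.2 hyr
  have hball := hp.changeOrigin (hyr'.trans_lt (le_self_add.trans_lt hrρ))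
  rw [add_sub_cancel] at hball
  refine ⟨_, hball.mono (by exact_mod_cast hr) ?_, hC _ hyr⟩
  exact ENNReal.le_sub_of_add_le_right ENNReal.coe_ne_top ((by gcongr : _ ≤ _).trans hrρ.le)

lemma exists_eventually_hasSum_snd {E : Type*} [NormedAddCommGroup E] [NormedSpace ℝ E]
    {f : E × ℝ → ℝ} {s₀ : E} (hf : AnalyticAt ℝ f (s₀, 0)) :
    ∃ r > 0, ∃ C, ∀ᶠ s in 𝓝 s₀, ∃ c : ℕ → ℝ, (∀ n, |c n| * r ^ n ≤ C) ∧
      ∀ ζ, |ζ| < r → HasSum (fun n => ζ ^ n * c n) (f (s, ζ)) := by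
  obtain ⟨r, hr, C, hp⟩ := exists_eventually_hasFPowerSeriesOnBall hf
  have hlim : Tendsto (fun s : E => (s, (0 : ℝ))) (𝓝 s₀) (𝓝 (s₀, 0)) :=
    (show Continuous fun s : E => (s, (0 : ℝ)) by fun_prop).tendsto s₀
  refine ⟨r, hr, C, (hlim.eventually hp).mono fun s hs => ?_⟩
  obtain ⟨p, hps, hpC⟩ := hs
  refine ⟨fun n => p n fun _ => (0, 1), fun n => ?_, fun ζ hζ => ?_⟩
  · calc |p n fun _ => (0, 1)| * r ^ n ≤ ‖p n‖ * r ^ n := by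
          gcongr
          simpa using (p n).le_opNorm fun _ => (0, 1)
      _ ≤ C := by exact_mod_cast hpC n
  · have hmem : ((0 : E), ζ) ∈ Metric.eball (0 : E × ℝ) r := by
      simpa [Prod.edist_eq, edist_dist] using hζ
    have hterm (n : ℕ) : (p n fun _ => (0, ζ)) = ζ ^ n * p n fun _ => (0, 1) := by
      simpa using (p n).map_smul_univ (fun _ => ζ) fun _ => ((0 : E), (1 : ℝ))
    simpa [hterm] using hps.hasSum hmem

lemma ae_abs_le_of_integral_pow_le {ν : Measure ℝ} [IsFiniteMeasure ν] {C L : ℝ} (hL : 0 ≤ L)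
    (hint : ∀ n : ℕ, Integrable (fun x => x ^ (2 * n)) ν)
    (h : ∀ n : ℕ, ∫ x, x ^ (2 * n) ∂ν ≤ C * L ^ (2 * n)) : ∀ᵐ x ∂ν, |x| ≤ L := by
  have hlt {a : ℝ} (ha : L < a) : ∀ᵐ x ∂ν, |x| < a := by
    have ha0 : 0 < a := hL.trans_lt ha
    have hcheb (n : ℕ) : ν.real {x | a ≤ |x|} ≤ C * ((L / a) ^ 2) ^ n := by
      have hset : {x : ℝ | a ^ (2 * n) ≤ x ^ (2 * n)} ⊇ {x | a ≤ |x|} := fun x (hx : a ≤ |x|) => by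
        simpa [pow_mul] using pow_le_pow_left₀ ha0.le hx (2 * n)
      rw [← pow_mul, div_pow, ← mul_div_assoc, le_div_iff₀ (by positivity), mul_comm]
      calc a ^ (2 * n) * ν.real {x | a ≤ |x|}
          ≤ a ^ (2 * n) * ν.real {x | a ^ (2 * n) ≤ x ^ (2 * n)} :=
            mul_le_mul_of_nonneg_left (measureReal_mono hset) (pow_nonneg ha0.le _)
        _ ≤ ∫ x, x ^ (2 * n) ∂ν :=
            mul_meas_ge_le_integral_of_nonneg
              (.of_forall fun x => (even_two_mul n).pow_nonneg x) (hint n) _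
        _ ≤ C * L ^ (2 * n) := h n
    have hlim : Tendsto (fun n : ℕ => C * ((L / a) ^ 2) ^ n) atTop (𝓝 (C * 0)) := by
      refine (tendsto_pow_atTop_nhds_zero_of_lt_one (by positivity) ?_).const_mul C
      rw [sq_lt_one_iff₀ (by positivity), div_lt_one ha0]
      exact ha
    have hzero : ν.real {x | a ≤ |x|} = 0 :=
      le_antisymm (by simpa using ge_of_tendsto' hlim hcheb) measureReal_nonneg
    simpa [ae_iff] using (measureReal_eq_zero_iff (by finiteness)).1 hzero
  obtain ⟨a, -, ha, hlim⟩ := exists_seq_strictAnti_tendsto L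
  filter_upwards [ae_all_iff.2 fun n => hlt (ha n)] with x hx
  exact ge_of_tendsto' hlim fun n => (hx n).le

lemma ordinaryMGF_eq_of_frequently_eq {ω : Measure ℝ} [IsFiniteMeasure ω] {R r C : ℝ}
    {c : ℕ → ℝ} {k : ℝ → ℝ} (hR : ∀ᵐ x ∂ω, |x| ≤ R) (hr : 0 < r) (hc : ∀ n, |c n| * r ^ n ≤ C)
    (hk : ∀ ζ, |ζ| < r → HasSum (fun n => ζ ^ n * c n) (k ζ))
    (h : ∃ᶠ ζ in 𝓝[≠] 0, ordinaryMGF ω ζ = k ζ) :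
    (∀ᵐ x ∂ω, |x| ≤ r⁻¹) ∧ ∀ ζ, |ζ| < r → ordinaryMGF ω ζ = k ζ := by
  have hk' : ∀ᶠ ζ in 𝓝 0, HasSum (fun n => ζ ^ n * c n) (k ζ) :=
    (continuous_abs.continuousAt.eventually_lt_const (by simpa using hr)).mono hk
  have heq : ∀ᶠ ζ in 𝓝 0, ordinaryMGF ω ζ = k ζ :=
    ((hasFPowerSeriesAt_ordinaryMGF hR).analyticAt.frequently_eq_iff_eventually_eq
      (hasFPowerSeriesAt_of_eventually_hasSum hk').analyticAt).1 h
  have hmom : ∀ n, ∫ x, x ^ n ∂ω = c n := integral_pow_eq_of_eventually_hasSum hR <| by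
    filter_upwards [heq, hk'] with ζ hζ hsum
    rwa [hζ]
  have hsupp : ∀ᵐ x ∂ω, |x| ≤ r⁻¹ := by
    refine ae_abs_le_of_integral_pow_le (C := C) (by positivity)
      (fun n => integrable_of_continuousOn_Icc hR (by fun_prop)) fun n => ?_
    rw [hmom, inv_pow, ← div_eq_mul_inv, le_div_iff₀ (by positivity)]
    exact le_trans (by gcongr; exact le_abs_self _) (hc (2 * n))
  refine ⟨hsupp, fun ζ hζ => ?_⟩
  have hζr : |ζ * r⁻¹| < 1 := by rwa [← div_eq_mul_inv, abs_div, abs_of_pos hr, div_lt_one hr]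
  exact (hasSum_ordinaryMGF hsupp hζr).unique (by simpa only [hmom] using hk ζ hζ)

/-- The germ `K` exists because `(s, m) ↦ (s, m / (V m + s m²))` is a local analytic
diffeomorphism at the origin. -/
lemma exists_analyticAt_ordinaryMGF_germ {V : ℝ → ℝ} (hV : AnalyticAt ℝ V 0) (hV0 : V 0 = 1) :
    ∃ K : ℝ × ℝ → ℝ, AnalyticAt ℝ K (0, 0) ∧ ∀ᶠ p in 𝓝 ((0 : ℝ), (0 : ℝ)),
      K (p.1, p.2 / (V p.2 + p.1 * p.2 ^ 2)) = (V p.2 + p.1 * p.2 ^ 2) ^ 2 / V p.2 := by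
  have hV2 : AnalyticAt ℝ (fun p : ℝ × ℝ => V p.2) (0, 0) :=
    AnalyticAt.fun_comp (g := V) hV analyticAt_snd
  have hD : AnalyticAt ℝ (fun p : ℝ × ℝ => V p.2 + p.1 * p.2 ^ 2) (0, 0) :=
    hV2.fun_add (analyticAt_fst.fun_mul (analyticAt_snd.fun_pow 2))
  have hDinv : AnalyticAt ℝ (fun p : ℝ × ℝ => (V p.2 + p.1 * p.2 ^ 2)⁻¹) (0, 0) :=
    hD.fun_inv (by simp [hV0])
  have hg : AnalyticAt ℝ (fun p : ℝ × ℝ => (p.1, p.2 * (V p.2 + p.1 * p.2 ^ 2)⁻¹)) (0, 0) :=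
    analyticAt_fst.prod (analyticAt_snd.fun_mul hDinv)
  have hg' : HasFDerivAt (fun p : ℝ × ℝ => (p.1, p.2 * (V p.2 + p.1 * p.2 ^ 2)⁻¹))
      (ContinuousLinearEquiv.refl ℝ (ℝ × ℝ) : ℝ × ℝ →L[ℝ] ℝ × ℝ) (0, 0) := by
    convert! hasFDerivAt_fst.prodMk (hasFDerivAt_snd.mul hDinv.differentiableAt.hasFDerivAt) using 1
    ext <;> simp [hV0]
  obtain ⟨K, hK, hKg⟩ := exists_analyticAt_comp_eventuallyEq hg hg'
    ((hD.pow 2).fun_div hV2 (by simp [hV0]))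
  exact ⟨K, by simpa using hK, by simpa [EventuallyEq, div_eq_mul_inv] using hKg⟩

lemma exists_eventually_ordinaryMGF_eq {V : ℝ → ℝ} (hV : AnalyticAt ℝ V 0) (hV0 : V 0 = 1) :
    ∃ K : ℝ × ℝ → ℝ, AnalyticAt ℝ K (0, 0) ∧ (∀ᶠ m in 𝓝 0, K (0, m / V m) = V m) ∧
      ∃ r > 0, ∀ᶠ s in 𝓝 0, ∀ ω, IsScaledLevyLaw V s ω →
        (∀ᵐ x ∂ω, |x| ≤ r⁻¹) ∧ ∀ ζ, |ζ| < r → ordinaryMGF ω ζ = K (s, ζ) := by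
  have hV0' : 0 < V 0 := hV0 ▸ one_pos
  obtain ⟨K, hK, hKV⟩ := exists_analyticAt_ordinaryMGF_germ hV hV0
  obtain ⟨r, hr, C, hslice⟩ := exists_eventually_hasSum_snd hK
  refine ⟨K, hK, ?_, r, hr, ?_⟩
  · have hlim : Tendsto (fun m : ℝ => ((0 : ℝ), m)) (𝓝 0) (𝓝 (0, 0)) :=
      (show Continuous fun m : ℝ => ((0 : ℝ), m) by fun_prop).tendsto 0
    filter_upwards [hlim.eventually hKV, hV.continuousAt.eventually_const_lt hV0'] with m hm hVm
    simpa [pow_two, hVm.ne'] using hm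
  · rw [nhds_prod_eq] at hKV
    filter_upwards [hslice, hKV.curry] with s ⟨c, hc, hsum⟩ hKs ω ⟨hω, ⟨R, hR⟩, hM⟩
    refine ordinaryMGF_eq_of_frequently_eq hR hr hc hsum ?_
    have hq : Tendsto (fun m => m / (V m + s * m ^ 2)) (𝓝[≠] 0) (𝓝[≠] 0) := by
      refine tendsto_nhdsWithin_iff.2
        ⟨(tendsto_div_add_mul_sq hV.continuousAt hV0' s).mono_left nhdsWithin_le_nhds, ?_⟩
      filter_upwards [self_mem_nhdsWithin,
        nhdsWithin_le_nhds (eventually_add_mul_sq_pos hV.continuousAt hV0' s)] with m hm hD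
      exact div_ne_zero hm hD.ne'
    refine hq.frequently (Eventually.frequently ?_)
    filter_upwards [nhdsWithin_le_nhds hKs, nhdsWithin_le_nhds hM] with m hKm hMm
    rw [hMm, hKm]

end UniformSupport

section Limit

lemma exists_subseq_tendsto_integral {ω : ℕ → Measure ℝ} [∀ n, IsProbabilityMeasure (ω n)] {L : ℝ}
    (hL : ∀ n, ∀ᵐ x ∂(ω n), |x| ≤ L) :
    ∃ ω₀ : Measure ℝ, IsProbabilityMeasure ω₀ ∧ (∀ᵐ x ∂ω₀, |x| ≤ L) ∧ ∃ φ : ℕ → ℕ, StrictMono φ ∧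
      ∀ f : ℝ → ℝ, ContinuousOn f (Set.Icc (-L) L) →
        Tendsto (fun n => ∫ x, f x ∂(ω (φ n))) atTop (𝓝 (∫ x, f x ∂ω₀)) := by
  have hLn : -L ≤ L := by
    obtain ⟨x, hx⟩ := (hL 0).exists
    exact (abs_le.1 hx).1.trans (abs_le.1 hx).2
  let μ (n : ℕ) : ProbabilityMeasure (Set.Icc (-L) L) :=
    ⟨(ω n).map (Set.projIcc (-L) L hLn),
      Measure.isProbabilityMeasure_map continuous_projIcc.aemeasurable⟩
  obtain ⟨μ₀, φ, hφ, hlim⟩ := CompactSpace.tendsto_subseq μ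
  have hemb : MeasurableEmbedding ((↑) : Set.Icc (-L) L → ℝ) := .subtype_coe measurableSet_Icc
  refine ⟨(μ₀ : Measure (Set.Icc (-L) L)).map Subtype.val,
    Measure.isProbabilityMeasure_map (by fun_prop), ?_, φ, hφ, fun f hf => ?_⟩
  · rw [ae_map_iff (by fun_prop) (measurableSet_le (by fun_prop) (by fun_prop))]
    exact .of_forall fun x => abs_le.2 x.2
  · have hf' : Continuous fun x : Set.Icc (-L) L => f x := hf.domRestrict
    have hμ (n : ℕ) : ∫ x, f x ∂(μ n : Measure (Set.Icc (-L) L)) = ∫ x, f x ∂(ω n) := by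
      change ∫ x, f x ∂((ω n).map (Set.projIcc (-L) L hLn)) = _
      rw [integral_map continuous_projIcc.aemeasurable hf'.aestronglyMeasurable]
      refine integral_congr_ae ((hL n).mono fun x hx => ?_)
      simp only [Set.projIcc_of_mem hLn (abs_le.1 hx)]
    rw [hemb.integral_map]
    exact (ProbabilityMeasure.tendsto_iff_forall_integral_tendsto.1 hlim
      (.mkOfCompact ⟨_, hf'⟩)).congr fun n => hμ (φ n)

lemma exists_isScaledLevyLaw_zero_of_frequently {V : ℝ → ℝ} (hV : AnalyticAt ℝ V 0)
    (hV0 : V 0 = 1) (h : ∃ᶠ s in 𝓝 0, ∃ ω, IsScaledLevyLaw V s ω) :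
    ∃ ω, IsScaledLevyLaw V 0 ω := by
  obtain ⟨K, hK, hKV, r, hr, hunif⟩ := exists_eventually_ordinaryMGF_eq hV hV0
  obtain ⟨s, hs, hsω⟩ := exists_seq_forall_of_frequently (h.and_eventually hunif)
  choose ω hω using fun n => (hsω n).1
  have hωK (n : ℕ) := (hsω n).2 (ω n) (hω n)
  have := fun n => (hω n).isProbabilityMeasure
  obtain ⟨ω₀, hω₀, hsupp, φ, hφ, hlim⟩ := exists_subseq_tendsto_integral fun n => (hωK n).1
  have hK₀ : ∀ᶠ ζ in 𝓝 0, ordinaryMGF ω₀ ζ = K (0, ζ) := by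
    have hpair : Tendsto (fun ζ : ℝ => ((0 : ℝ), ζ)) (𝓝 0) (𝓝 (0, 0)) :=
      (show Continuous fun ζ : ℝ => ((0 : ℝ), ζ) by fun_prop).tendsto 0
    have hζr : ∀ᶠ ζ : ℝ in 𝓝 0, |ζ| < r :=
      continuous_abs.continuousAt.eventually_lt_const (by simpa using hr)
    filter_upwards [hpair.eventually hK.eventually_continuousAt, hζr,
      eventually_abs_mul_lt_one r⁻¹] with ζ hKζ hζ hζr
    have hleft : Tendsto (fun n => ordinaryMGF (ω (φ n)) ζ) atTop (𝓝 (ordinaryMGF ω₀ ζ)) :=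
      hlim _ (continuousOn_inv_one_sub_mul hζr)
    have hright : Tendsto (fun n => K (s (φ n), ζ)) atTop (𝓝 (K (0, ζ))) :=
      hKζ.tendsto.comp ((hs.comp hφ.tendsto_atTop).prodMk_nhds tendsto_const_nhds)
    exact tendsto_nhds_unique hleft (by simpa only [(hωK _).2 ζ hζ] using hright)
  refine ⟨ω₀, hω₀, ⟨r⁻¹, hsupp⟩, ?_⟩
  have hV0' : 0 < V 0 := hV0 ▸ one_pos
  have hq := tendsto_div_add_mul_sq hV.continuousAt hV0' 0
  filter_upwards [hq.eventually hK₀, hKV, hV.continuousAt.eventually_const_lt hV0']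
    with m hm hKm hVm
  simp only [zero_mul, add_zero] at hm ⊢
  rw [hm, hKm, pow_two, mul_div_cancel_right₀ _ hVm.ne']

end Limit

theorem memV_sub_sq_general (V₁ : ℝ → ℝ) (h₁ : ∃ᶠ c in atTop, memV (fun m => V₁ (c * m))) :
    memV (fun m => V₁ m - m ^ 2) := by
  obtain ⟨c, hc, hmem⟩ := (h₁.and_eventually (eventually_ne_atTop 0)).exists.imp fun _ h => h.symm
  have hV : AnalyticAt ℝ V₁ 0 := by
    have hcomp := AnalyticAt.fun_comp_of_eq (f := fun m => c⁻¹ * m) (y := 0) hmem.analyticAt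
      (analyticAt_const.fun_mul analyticAt_id) (mul_zero _)
    simpa only [mul_inv_cancel_left₀ hc] using hcomp
  have hV0 : V₁ 0 = 1 := by simpa only [mul_zero] using hmem.apply_zero_s6
  have hscale : Tendsto (fun c : ℝ => (c ^ 2)⁻¹) atTop (𝓝 0) :=
    (tendsto_pow_atTop two_ne_zero).inv_tendsto_atTop
  have hfreq : ∃ᶠ s in 𝓝 0, ∃ ω, IsScaledLevyLaw V₁ s ω :=
    hscale.frequently <| (h₁.and_eventually (eventually_ne_atTop 0)).mono fun c ⟨hmem, hc⟩ =>
      hmem.exists_isScaledLevyLaw_of_comp_mul (mul_inv_cancel₀ (pow_ne_zero 2 hc))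
  obtain ⟨ω, hω⟩ := exists_isScaledLevyLaw_zero_of_frequently hV hV0 hfreq
  exact memV_sub_sq_of_isScaledLevyLaw_zero hV (hV0 ▸ one_pos) hω

/-- If `V₁ ∈ 𝒱∞` then `m ↦ V₁(m) − m² ∈ 𝒱`. -/
theorem memV_sub_sq (V₁ : ℝ → ℝ) (h₁ : memVinf V₁) :
    memV (fun m => V₁ m - m ^ 2) :=
  memV_sub_sq_general V₁ (Eventually.of_forall h₁).frequently
end
end
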